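/- Let 𝒱 = {𝓛₁, 𝓛₂} be a veering pair. Then each point p of S¹ falls into one of the following cases: (1) p is a rainbow point of both 𝓛₁ and 𝓛₂; (2) for some i ∈ {1,2}, p is a rainbow point of 𝓛_i and a tip of a unique real gap of the other lamination system; (3) p is the common pivot of a crown 𝒢₁ of 𝓛₁ and a crown 𝒢₂ of 𝓛₂ that interleave. -/

import Mathlib

/-! Cutting the circle at a point `p` turns the good intervals that miss `p` into subintervals
`(lo, hi)` of `(0, 1)`, so nesting and disjointness become inequalities. The unlinkedness of a
lamination makes suitable families of its intervals laminar, and the union of an ascending sequence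
is again a leaf side unless it exhausts the circle minus `p` (`chain_union`). Hence the maximal
elements of a laminar family that sees every leaf and bounds its ascending chains form a gap
(`exists_max_gap`). This is the source of all gaps below.

* Off the endpoint set `E(L)`, apply this to the intervals missing `q`: either some chain exhausts
  the circle minus `q`, which dualizes to a rainbow, or `q` is a vertex of a gap
  (`rainbow_or_vertex`). In a quite full system vertices are tips or pivots, and tips are endpoints,
  so `q` is a rainbow point or a pivot (`rainbow_or_pivot`). In both cases endpoints accumulate at
  `q`, so `E(L)` is dense (`dense_E`), and by strong transversality the endpoint set of the other
  system contains no interval (`codense`).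
* Pivots are shared: vertices of a crown accumulate at its pivot, so those of an interleaving gap
  do as well, which makes it a crown with the same pivot (`pivot_of_interleave`). Hence
  pivots of either system fall under the third case.
* An endpoint that is not a pivot is a tip of a unique real gap (`existsUnique_real_tip`). An
  isolated element bounds a non-leaf gap on its own side (`exists_gap_of_isolated`), so by looseness
  non-leaf gaps are real, and a leaf gap at `p` is real when no non-leaf gap has `p` as a vertex.
  Uniqueness among non-leaf gaps is looseness. A real leaf at `p` excludes every other leaf at `p`
  (`unique_of_real_leaf`): its side sequences would produce a third leaf at `p`, while two leaves
  with a common endpoint enclose a non-leaf gap there (`exists_gap_between`, which uses a point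
  off `E(L)` between them), so three of them would give two non-leaf gaps sharing a vertex
  (`no_three`).

Since the endpoint sets are disjoint, `p` is off one of them, and the cases combine in
`trichotomy_of_notMem_E`. -/

open Set Filter Topology

namespace Veering

/-- The circle `S¹`: the unit additive circle `ℝ / ℤ`, with its standard
circular order (`sbtw x y z` means the triple `(x,y,z)` is counterclockwise)
and its standard topology. -/
abbrev S1 : Type := UnitAddCircle

/-- A good open interval in `S¹`, recorded by its ordered pair of distinct
endpoints; its carrier is the set of points strictly counterclockwise
between them. -/
structure GoodInt : Type where
  a : S1
  b : S1
  ne : a ≠ b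

namespace GoodInt

/-- The set of points of the good open interval `(a, b)`. -/
def carrier (I : GoodInt) : Set S1 := {z : S1 | sbtw I.a z I.b}

/-- The dual good interval `(u,v)* = (v,u)`. -/
def dual (I : GoodInt) : GoodInt := ⟨I.b, I.a, I.ne.symm⟩

/-- The vertex set `v(ℓ(I)) = {a, b}` of the leaf determined by `I`. -/
def verts (I : GoodInt) : Set S1 := {I.a, I.b}

end GoodInt

/-- `I` and `J` represent the same leaf `ℓ(I) = {I, I*}`. -/
def SameLeaf (I J : GoodInt) : Prop := J = I ∨ J = I.dual

/-- A lamination system: a nonempty collection of good open intervals, closed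
under duals, pairwise unlinked, and closed under unions of ascending chains
(when these unions are good intervals). -/
structure LamSys : Type where
  mem : Set GoodInt
  nonempty : mem.Nonempty
  dual_mem : ∀ I ∈ mem, GoodInt.dual I ∈ mem
  unlinked : ∀ I ∈ mem, ∀ J ∈ mem,
      I.carrier ⊆ J.carrier ∨ I.dual.carrier ⊆ J.carrier ∨
      I.carrier ⊆ J.dual.carrier ∨ I.dual.carrier ⊆ J.dual.carrier
  chain_closed : ∀ c : ℕ → GoodInt, (∀ n, c n ∈ mem) →
      (∀ n, (c n).carrier ⊆ (c (n + 1)).carrier) →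
      ∀ J : GoodInt, J.carrier = ⋃ n, (c n).carrier → J ∈ mem

namespace LamSys

/-- The endpoint set `E(𝓛)`: the union of the vertex sets of all leaves. -/
def E (L : LamSys) : Set S1 := ⋃ I ∈ L.mem, I.verts

/-- A gap of `L`: a set of pairwise disjoint elements of `L` such that every
leaf of `L` lies on one of them. -/
def IsGap (L : LamSys) (G : Set GoodInt) : Prop :=
  G ⊆ L.mem ∧
  (∀ I ∈ G, ∀ J ∈ G, I ≠ J → Disjoint I.carrier J.carrier) ∧
  (∀ I ∈ L.mem, ∃ J ∈ G, I.carrier ⊆ J.carrier ∨ I.dual.carrier ⊆ J.carrier)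

end LamSys

/-- The vertex set `v(𝒢) = S¹ \ ⋃ 𝒢` of a gap. -/
def gapVerts (G : Set GoodInt) : Set S1 := (⋃ I ∈ G, I.carrier)ᶜ

/-- `t` is a tip of `G`: an isolated point of the vertex set of `G`. -/
def IsTipOf (t : S1) (G : Set GoodInt) : Prop :=
  t ∈ gapVerts G ∧ t ∉ closure (gapVerts G \ {t})

/-- A gap that is itself a leaf `{I, I*}`. -/
def IsLeafGap (G : Set GoodInt) : Prop := ∃ I : GoodInt, G = {I, I.dual}

/-- `G` is a crown with tip sequence `t : ℤ → S¹` and pivot `p`. -/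
def IsCrownWith (G : Set GoodInt) (t : ℤ → S1) (p : S1) : Prop :=
  (∀ k, p ≠ t k) ∧ (∀ k, t k ≠ t (k + 1)) ∧
  G = {I : GoodInt | ∃ k : ℤ, I.a = t k ∧ I.b = t (k + 1)} ∧
  gapVerts G = Set.range t ∪ {p}

/-- `G` is a crown. -/
def IsCrown (G : Set GoodInt) : Prop := ∃ t p, IsCrownWith G t p

/-- `p` is the pivot of the crown `G`. -/
def IsPivotOf (p : S1) (G : Set GoodInt) : Prop := ∃ t, IsCrownWith G t p

/-- A lamination system is quite full if every gap is an ideal polygon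
(finitely many vertices) or a crown. -/
def LamSys.QuiteFull (L : LamSys) : Prop :=
  ∀ G : Set GoodInt, L.IsGap G → (gapVerts G).Finite ∨ IsCrown G

/-- `p` is a rainbow point of `L`: there is a strictly descending sequence of
elements of `L` whose intersection is `{p}`. -/
def LamSys.IsRainbowPt (L : LamSys) (p : S1) : Prop :=
  ∃ I : ℕ → GoodInt, (∀ n, I n ∈ L.mem) ∧
    (∀ n, (I (n + 1)).carrier ⊂ (I n).carrier) ∧ (⋂ n, (I n).carrier) = {p}

/-- `L` is loose: distinct non-leaf gaps have disjoint vertex sets. -/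
def LamSys.Loose (L : LamSys) : Prop :=
  ∀ G H : Set GoodInt, L.IsGap G → L.IsGap H → ¬ IsLeafGap G → ¬ IsLeafGap H →
    G ≠ H → Disjoint (gapVerts G) (gapVerts H)

/-- The sequence of leaves represented by `c` converges to the good
interval `J`. -/
def SeqConv (c : ℕ → GoodInt) (J : GoodInt) : Prop :=
  ∃ d : ℕ → GoodInt, (∀ n, SameLeaf (c n) (d n)) ∧
    J.carrier ⊆ Filter.liminf (fun n => (d n).carrier) Filter.atTop ∧
    Filter.limsup (fun n => (d n).carrier) Filter.atTop ⊆ closure J.carrier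

/-- `I ∈ L` admits an `I`-side sequence: a sequence of leaves of `L`, each
distinct from `ℓ(I)` and lying on `I`, converging to `I`.  (`I` is isolated
precisely when this fails.) -/
def LamSys.HasSideSeq (L : LamSys) (I : GoodInt) : Prop :=
  ∃ c : ℕ → GoodInt, (∀ n, c n ∈ L.mem) ∧ (∀ n, ¬ SameLeaf I (c n)) ∧
    (∀ n, (c n).carrier ⊆ I.carrier ∨ (c n).dual.carrier ⊆ I.carrier) ∧
    SeqConv c I

/-- `L` is totally disconnected: every distinct pair is separated by a
non-leaf gap. -/
def LamSys.TotDisc (L : LamSys) : Prop :=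
  ∀ I ∈ L.mem, ∀ J ∈ L.mem, I.carrier ⊂ J.dual.carrier →
    ∃ G : Set GoodInt, L.IsGap G ∧ ¬ IsLeafGap G ∧
      ∃ M ∈ G, ∃ N ∈ G, I.carrier ⊆ M.carrier ∧ J.carrier ⊆ N.carrier

/-- Gaps `G1` and `G2` interleave: every element of each contains exactly one
vertex of the other. -/
def Interleave (G1 G2 : Set GoodInt) : Prop :=
  (∀ I ∈ G1, ∃! x : S1, x ∈ I.carrier ∩ gapVerts G2) ∧
  (∀ I ∈ G2, ∃! x : S1, x ∈ I.carrier ∩ gapVerts G1)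

/-- A pseudo-fibered pair: two quite full, loose, strongly transverse
lamination systems. -/
structure PseudoFibered (L1 L2 : LamSys) : Prop where
  qf1 : L1.QuiteFull
  qf2 : L2.QuiteFull
  loose1 : L1.Loose
  loose2 : L2.Loose
  transverse : L1.E ∩ L2.E = ∅

/-- A veering pair: a pseudo-fibered pair in which every non-leaf gap of one
system admits an interleaving gap in the other. -/
structure VeeringPair (L1 L2 : LamSys) extends PseudoFibered L1 L2 : Prop where
  inter1 : ∀ G : Set GoodInt, L1.IsGap G → ¬ IsLeafGap G →
    ∃ H : Set GoodInt, L2.IsGap H ∧ Interleave G H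
  inter2 : ∀ G : Set GoodInt, L2.IsGap G → ¬ IsLeafGap G →
    ∃ H : Set GoodInt, L1.IsGap H ∧ Interleave G H

/-- An orientation-preserving homeomorphism of the circle: a bijection of
`S¹` which together with its inverse is continuous, and which preserves the
counterclockwise circular order. -/
def PosHomeo (g : Equiv.Perm S1) : Prop :=
  Continuous ⇑g ∧ Continuous ⇑g.symm ∧
  ∀ x y z : S1, sbtw x y z → sbtw (g x) (g y) (g z)

/-- `g ∈ Aut(𝓛)`: an orientation-preserving homeomorphism of `S¹` mapping each
element of `𝓛` to an element of `𝓛`. -/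
def LamSys.InAut (L : LamSys) (g : Equiv.Perm S1) : Prop :=
  PosHomeo g ∧ ∀ I ∈ L.mem, ∃ J ∈ L.mem, J.carrier = ⇑g '' I.carrier

/-- `g` maps the gap `G` onto itself. -/
def MapsGapOnto (g : Equiv.Perm S1) (G : Set GoodInt) : Prop :=
  (∀ I ∈ G, ∃ J ∈ G, J.carrier = ⇑g '' I.carrier) ∧
  (∀ J ∈ G, ∃ I ∈ G, J.carrier = ⇑g '' I.carrier)

/-- The fixed point set of `g` on `S¹`. -/
def FixSet (g : Equiv.Perm S1) : Set S1 := {x : S1 | g x = x}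

/-- The set of periodic points of `g` on `S¹`. -/
def PerSet (g : Equiv.Perm S1) : Set S1 := {x : S1 | ∃ n : ℕ, 0 < n ∧ (g ^ n) x = x}

/-- `p` is an attracting fixed point of `g`. -/
def IsAttractingFix (g : Equiv.Perm S1) (p : S1) : Prop :=
  g p = p ∧ ∃ I : GoodInt, I.carrier ∩ FixSet g = {p} ∧
    ⇑g '' closure I.carrier ⊆ I.carrier

/-- `p` is a repelling fixed point of `g`. -/
def IsRepellingFix (g : Equiv.Perm S1) (p : S1) : Prop :=
  g p = p ∧ ∃ I : GoodInt, I.carrier ∩ FixSet g = {p} ∧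
    I.carrier ⊆ ⇑g '' closure I.carrier

/-- `g` is elliptic: nontrivial of finite order. -/
def Elliptic (g : Equiv.Perm S1) : Prop := g ≠ 1 ∧ IsOfFinOrder g

/-- `g` is parabolic: it has exactly one fixed point. -/
def Parabolic (g : Equiv.Perm S1) : Prop := ∃! x : S1, g x = x

/-- `g` is hyperbolic: exactly two fixed points, one attracting and one
repelling. -/
def Hyperbolic (g : Equiv.Perm S1) : Prop :=
  ∃ a b : S1, a ≠ b ∧ FixSet g = {a, b} ∧ IsAttractingFix g a ∧ IsRepellingFix g b

/-- `g` is pseudo-Anosov-like for the pair `(L1, L2)`: nontrivial, neither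
elliptic nor parabolic, and preserving both gaps of some interleaving pair. -/
def PAlike (L1 L2 : LamSys) (g : Equiv.Perm S1) : Prop :=
  g ≠ 1 ∧ ¬ Elliptic g ∧ ¬ Parabolic g ∧
  ∃ G1 G2 : Set GoodInt, L1.IsGap G1 ∧ L2.IsGap G2 ∧ Interleave G1 G2 ∧
    MapsGapOnto g G1 ∧ MapsGapOnto g G2

/-- `g` is properly pseudo-Anosov: pA-like with nonempty fixed point set. -/
def ProperlyPA (L1 L2 : LamSys) (g : Equiv.Perm S1) : Prop :=
  PAlike L1 L2 g ∧ (FixSet g).Nonempty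

/-- Two leaves are linked: each of the two complementary components of the
vertex set of one contains a vertex of the other. -/
def LeavesLinked (I J : GoodInt) : Prop :=
  (I.carrier ∩ J.verts).Nonempty ∧ (I.dual.carrier ∩ J.verts).Nonempty

/-- Two gaps are linked: they contain a linked pair of boundary leaves. -/
def GapsLinked (G1 G2 : Set GoodInt) : Prop :=
  ∃ I1 ∈ G1, ∃ I2 ∈ G2, LeavesLinked I1 I2

/-- Gaps `G1`, `G2` cross: there are distinct pairs `{I₁, J₁} ⊆ G1`,
`{I₂, J₂} ⊆ G2` such that for each `i`, the vertex set of the other gap is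
contained in `Iᵢ ∪ Jᵢ` and meets `Iᵢ` in exactly one point. -/
def GapsCross (G1 G2 : Set GoodInt) : Prop :=
  ∃ I1 ∈ G1, ∃ J1 ∈ G1, ∃ I2 ∈ G2, ∃ J2 ∈ G2,
    I1.carrier ⊂ J1.dual.carrier ∧ I2.carrier ⊂ J2.dual.carrier ∧
    gapVerts G2 ⊆ I1.carrier ∪ J1.carrier ∧
    (∃! x : S1, x ∈ I1.carrier ∩ gapVerts G2) ∧
    gapVerts G1 ⊆ I2.carrier ∪ J2.carrier ∧
    (∃! x : S1, x ∈ I2.carrier ∩ gapVerts G1)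

/-- The Baumslag–Solitar group `BS(m,n) = ⟨a, b | b aᵐ b⁻¹ = aⁿ⟩`,
with `a = FreeGroup.of false` and `b = FreeGroup.of true`. -/
abbrev BSGroup (m n : ℤ) : Type :=
  PresentedGroup
    ({FreeGroup.of true * FreeGroup.of false ^ m * (FreeGroup.of true)⁻¹ *
        (FreeGroup.of false ^ n)⁻¹} : Set (FreeGroup Bool))

/-! ### Coordinates on the circle cut at a point -/

/-- The coordinate in `[0, 1)` of `x` on the circle cut at `p`: the counterclockwise distance from
`p` to `x`. -/
noncomputable def cd (p x : S1) : ℝ := (AddCircle.equivIco 1 0 (x - p) : ℝ)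

theorem cd_nonneg (p x : S1) : 0 ≤ cd p x := (AddCircle.equivIco 1 0 (x - p)).2.1

theorem cd_lt_one (p x : S1) : cd p x < 1 := by
  have := (AddCircle.equivIco 1 0 (x - p)).2.2
  simpa [cd] using this

theorem coe_cd (p x : S1) : ((cd p x : ℝ) : S1) = x - p := by
  exact (AddCircle.equivIco 1 0).symm_apply_apply (x - p)

theorem add_cd (p x : S1) : p + ((cd p x : ℝ) : S1) = x := by
  rw [coe_cd]; abel

theorem cd_inj {p x y : S1} (h : cd p x = cd p y) : x = y := by
  rw [← add_cd p x, ← add_cd p y, h]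

theorem cd_add {p : S1} {r : ℝ} (h0 : 0 ≤ r) (h1 : r < 1) : cd p (p + (r : S1)) = r := by
  have : (AddCircle.equivIco 1 0 (r : S1) : ℝ) = r := by
    rw [AddCircle.coe_equivIco_mk_apply]
    simp [Int.fract_eq_self.2 ⟨h0, h1⟩]
  simpa [cd] using this

theorem exists_cd (p : S1) {r : ℝ} (h0 : 0 ≤ r) (h1 : r < 1) : ∃ x, cd p x = r :=
  ⟨_, cd_add h0 h1⟩

theorem cd_self (p : S1) : cd p p = 0 := by
  simpa using cd_add (p := p) le_rfl one_pos

theorem cd_pos {p x : S1} (h : x ≠ p) : 0 < cd p x :=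
  lt_of_le_of_ne (cd_nonneg p x) fun h0 => h (cd_inj (p := p) (by rw [cd_self, ← h0]))

/-- The circular order on representatives within one period: the triple is increasing up to a
cyclic rotation. -/
theorem sbtw_coe {P r s t : ℝ} (hr : 0 ≤ r) (hr' : r < 1) (hs : 0 ≤ s) (hs' : s < 1)
    (ht : 0 ≤ t) (ht' : t < 1) :
    sbtw ((P + r : ℝ) : S1) ((P + s : ℝ) : S1) ((P + t : ℝ) : S1) ↔
      (r < s ∧ s < t) ∨ (s < t ∧ t < r) ∨ (t < r ∧ r < s) := by
  rw [sbtw_iff_not_btw]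
  have key : btw ((P + t : ℝ) : S1) ((P + s : ℝ) : S1) ((P + r : ℝ) : S1) ↔
      toIcoMod (zero_lt_one' ℝ) (P + t) (P + s) ≤ toIocMod (zero_lt_one' ℝ) (P + t) (P + r) :=
    QuotientAddGroup.btw_coe_iff
  rw [key]
  have h1 : toIcoMod (zero_lt_one' ℝ) (P + t) (P + s) = if t ≤ s then P + s else P + s + 1 := by
    rw [toIcoMod_eq_iff]
    split_ifs with h
    · exact ⟨⟨by linarith, by linarith⟩, 0, by simp⟩
    · exact ⟨⟨by linarith, by linarith⟩, -1, by simp⟩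
  have h2 : toIocMod (zero_lt_one' ℝ) (P + t) (P + r) = if t < r then P + r else P + r + 1 := by
    rw [toIocMod_eq_iff]
    split_ifs with h
    · exact ⟨⟨by linarith, by linarith⟩, 0, by simp⟩
    · exact ⟨⟨by linarith, by linarith⟩, -1, by simp⟩
  rw [h1, h2]
  split_ifs with ha hb hb <;> grind

/-- The circular order read in the coordinate on the circle cut at `p`. -/
theorem sbtw_iff_cd (p x y z : S1) : sbtw x y z ↔
    (cd p x < cd p y ∧ cd p y < cd p z) ∨ (cd p y < cd p z ∧ cd p z < cd p x) ∨
      (cd p z < cd p x ∧ cd p x < cd p y) := by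
  obtain ⟨P, rfl⟩ := QuotientAddGroup.mk_surjective p
  have := sbtw_coe (P := P) (cd_nonneg P x) (cd_lt_one P x) (cd_nonneg P y) (cd_lt_one P y)
    (cd_nonneg P z) (cd_lt_one P z)
  rw [AddCircle.coe_add, AddCircle.coe_add, AddCircle.coe_add, add_cd, add_cd, add_cd] at this
  exact this

/-! ### Good intervals in coordinates -/

theorem mem_cd (p : S1) (I : GoodInt) (y : S1) : y ∈ I.carrier ↔
    (cd p I.a < cd p y ∧ cd p y < cd p I.b) ∨ (cd p y < cd p I.b ∧ cd p I.b < cd p I.a) ∨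
      (cd p I.b < cd p I.a ∧ cd p I.a < cd p y) :=
  sbtw_iff_cd p I.a y I.b

theorem cd_ne {p x y : S1} (h : x ≠ y) : cd p x ≠ cd p y := fun e => h (cd_inj e)

theorem a_notMem (I : GoodInt) : I.a ∉ I.carrier := by
  rw [mem_cd I.a, cd_self]
  have := cd_nonneg I.a I.b
  grind

theorem b_notMem (I : GoodInt) : I.b ∉ I.carrier := by
  rw [mem_cd I.b, cd_self]
  have := cd_nonneg I.b I.a
  grind

theorem dual_dual (I : GoodInt) : I.dual.dual = I := rfl

theorem mem_dual (I : GoodInt) (y : S1) :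
    y ∈ I.dual.carrier ↔ y ∉ I.carrier ∧ y ≠ I.a ∧ y ≠ I.b := by
  constructor
  · intro h
    refine ⟨?_, ?_, ?_⟩
    · rw [mem_cd 0] at h ⊢
      change _ ∨ _ at h
      simp only [GoodInt.dual] at h
      grind
    · rintro rfl; exact b_notMem I.dual h
    · rintro rfl; exact a_notMem I.dual h
  · rintro ⟨h, ha, hb⟩
    have hab := cd_ne (p := 0) I.ne
    have ha := cd_ne (p := 0) ha
    have hb := cd_ne (p := 0) hb
    rw [mem_cd 0] at h ⊢
    simp only [GoodInt.dual]
    grind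

/-- Coordinate of the initial endpoint of `J` on the circle cut at `p`. -/
noncomputable def lo (p : S1) (J : GoodInt) : ℝ := cd p J.a

open Classical in
/-- Coordinate of the terminal endpoint of `J` on the circle cut at `p`; the cut point itself
counts as `1`, so that an interval avoiding `p` is `{y | lo p J < cd p y < hi p J}`. -/
noncomputable def hi (p : S1) (J : GoodInt) : ℝ := if J.b = p then 1 else cd p J.b

theorem lo_nonneg (p : S1) (J : GoodInt) : 0 ≤ lo p J := cd_nonneg _ _

theorem hi_le_one (p : S1) (J : GoodInt) : hi p J ≤ 1 := by
  unfold hi; split_ifs; exacts [le_rfl, (cd_lt_one _ _).le]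

theorem hi_pos (p : S1) (J : GoodInt) : 0 < hi p J := by
  unfold hi; split_ifs with h; exacts [one_pos, cd_pos h]

theorem lo_lt_one (p : S1) (J : GoodInt) : lo p J < 1 := cd_lt_one _ _

theorem lo_eq_zero {p : S1} {J : GoodInt} : lo p J = 0 ↔ J.a = p := by
  constructor
  · intro h; exact cd_inj (p := p) (by rw [cd_self]; exact h)
  · rintro rfl; exact cd_self _

theorem hi_eq_one {p : S1} {J : GoodInt} : hi p J = 1 ↔ J.b = p := by
  constructor
  · intro h
    by_contra hb
    rw [hi, if_neg hb] at h
    exact (cd_lt_one p J.b).ne h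
  · intro h; rw [hi, if_pos h]

theorem hi_eq_cd {p : S1} {J : GoodInt} (h : J.b ≠ p) : hi p J = cd p J.b := by
  rw [hi, if_neg h]

/-- An interval avoiding the cut point is an ordinary open interval in the coordinate. -/
theorem mem_lohi {p : S1} {J : GoodInt} (h : p ∉ J.carrier) (y : S1) :
    y ∈ J.carrier ↔ lo p J < cd p y ∧ cd p y < hi p J := by
  have h0 := cd_nonneg p J.a
  have h1 := cd_lt_one p y
  have h2 := cd_nonneg p y
  rw [mem_cd p] at h ⊢
  rw [cd_self] at h
  have hab := cd_ne (p := p) J.ne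
  by_cases hb : J.b = p
  · rw [hi_eq_one.2 hb, lo]
    rw [hb, cd_self] at hab ⊢
    rw [hb, cd_self] at h
    grind
  · have := cd_pos hb
    rw [hi_eq_cd hb, lo]
    grind

theorem lo_lt_hi {p : S1} {J : GoodInt} (h : p ∉ J.carrier) : lo p J < hi p J := by
  by_cases hb : J.b = p
  · rw [hi_eq_one.2 hb]; exact lo_lt_one _ _
  · rw [hi_eq_cd hb, lo]
    rw [mem_cd p, cd_self] at h
    have := cd_pos hb
    have hab := cd_ne (p := p) J.ne
    have h0 := cd_nonneg p J.a
    grind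

theorem subset_iff {p : S1} {J K : GoodInt} (hJ : p ∉ J.carrier) (hK : p ∉ K.carrier) :
    J.carrier ⊆ K.carrier ↔ lo p K ≤ lo p J ∧ hi p J ≤ hi p K := by
  constructor
  · intro h
    have hlt := lo_lt_hi hJ
    have h0 := lo_nonneg p J
    have h1 := hi_le_one p J
    constructor
    · by_contra! hc
      obtain ⟨r, hr, hr'⟩ := exists_between (lt_min hc hlt)
      have := lt_min_iff.1 hr'
      obtain ⟨y, rfl⟩ := exists_cd p (r := r) (by linarith) (by linarith)
      have := (mem_lohi hK y).1 (h ((mem_lohi hJ y).2 ⟨hr, this.2⟩))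
      linarith
    · by_contra! hc
      obtain ⟨r, hr, hr'⟩ := exists_between (max_lt hc hlt)
      have := max_lt_iff.1 hr
      obtain ⟨y, rfl⟩ := exists_cd p (r := r) (by linarith) (by linarith)
      have := (mem_lohi hK y).1 (h ((mem_lohi hJ y).2 ⟨this.2, hr'⟩))
      linarith
  · rintro ⟨h1, h2⟩ y hy
    rw [mem_lohi hJ] at hy
    rw [mem_lohi hK]
    constructor <;> linarith [hy.1, hy.2]

theorem ext_lohi {p : S1} {J K : GoodInt} (h1 : lo p J = lo p K) (h2 : hi p J = hi p K) :
    J = K := by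
  have ha : J.a = K.a := cd_inj h1
  have hb : J.b = K.b := by
    by_cases hb : J.b = p
    · rw [hb]; rw [hi_eq_one.2 hb] at h2; exact (hi_eq_one.1 h2.symm).symm
    · by_cases hb' : K.b = p
      · rw [hi_eq_one.2 hb'] at h2; exact absurd (hi_eq_one.1 h2) hb
      · rw [hi_eq_cd hb, hi_eq_cd hb'] at h2; exact cd_inj h2
  cases J; cases K; simp_all

theorem carrier_inj {J K : GoodInt} (h : J.carrier = K.carrier) : J = K := by
  have hJ := a_notMem J
  have hK : J.a ∉ K.carrier := h ▸ hJ
  have h1 := (subset_iff hJ hK).1 h.subset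
  have h2 := (subset_iff hK hJ).1 h.symm.subset
  exact ext_lohi (p := J.a) (le_antisymm h2.1 h1.1) (le_antisymm h1.2 h2.2)

theorem exists_int (p : S1) {l h : ℝ} (hl : 0 ≤ l) (hlh : l < h) (hh : h ≤ 1)
    (hne : ¬ (l = 0 ∧ h = 1)) :
    ∃ K : GoodInt, p ∉ K.carrier ∧ lo p K = l ∧ hi p K = h := by
  obtain ⟨a, ha⟩ := exists_cd p (r := l) hl (by linarith)
  rcases hh.lt_or_eq with h1 | rfl
  · obtain ⟨b, hb⟩ := exists_cd p (r := h) (by linarith) h1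
    refine ⟨⟨a, b, ?_⟩, ?_, ha, ?_⟩
    · rintro rfl; linarith
    · rw [mem_cd p, cd_self]; simp only [ha, hb]; grind
    · rw [hi_eq_cd]; exact hb
      intro hbp
      change b = p at hbp
      rw [hbp, cd_self] at hb
      linarith
  · refine ⟨⟨a, p, ?_⟩, b_notMem ⟨a, p, _⟩, ha, hi_eq_one.2 rfl⟩
    rintro rfl
    rw [cd_self] at ha
    exact hne ⟨ha.symm, rfl⟩

theorem exists_mem (I : GoodInt) : ∃ y, y ∈ I.carrier := by
  have h := a_notMem I
  have hlt := lo_lt_hi h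
  obtain ⟨r, hr, hr'⟩ := exists_between hlt
  have h0 := lo_nonneg I.a I
  have h1 := hi_le_one I.a I
  obtain ⟨y, rfl⟩ := exists_cd I.a (r := r) (by linarith) (by linarith)
  exact ⟨y, (mem_lohi h y).2 ⟨hr, hr'⟩⟩

theorem carrier_infinite (I : GoodInt) : I.carrier.Infinite := by
  have h := a_notMem I
  have h0 := lo_nonneg I.a I
  have h1 := hi_le_one I.a I
  intro hf
  refine Set.Ioo_infinite (lo_lt_hi h) ((hf.image (cd I.a)).subset ?_)
  rintro r ⟨hr, hr'⟩
  obtain ⟨y, rfl⟩ := exists_cd I.a (r := r) (by linarith) (by linarith)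
  exact ⟨y, (mem_lohi h y).2 ⟨hr, hr'⟩, rfl⟩

/-- An open interval containing the initial endpoint of `J` meets `J`. -/
theorem meet_of_a_mem {J K : GoodInt} (h : J.a ∈ K.carrier) :
    ∃ y, y ∈ J.carrier ∧ y ∈ K.carrier := by
  rw [mem_cd J.a, cd_self] at h
  have hb := cd_pos (p := J.a) J.ne.symm
  have h1 := cd_nonneg J.a K.a
  have h2 := cd_nonneg J.a K.b
  have hKb : 0 < cd J.a K.b := lt_of_le_of_ne h2 (by grind)
  obtain ⟨r, hr, hr'⟩ := exists_between (lt_min hb hKb)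
  have hlt := lt_min_iff.1 hr'
  obtain ⟨y, rfl⟩ := exists_cd J.a (r := r) hr.le (hlt.1.trans (cd_lt_one _ _))
  refine ⟨y, (mem_cd J.a _ _).2 ?_, (mem_cd J.a _ _).2 ?_⟩
  · rw [cd_self]; exact Or.inl ⟨hr, hlt.1⟩
  · right; left; refine ⟨hlt.2, ?_⟩; grind

/-- An open interval containing the terminal endpoint of `J` meets `J`. -/
theorem meet_of_b_mem {J K : GoodInt} (h : J.b ∈ K.carrier) :
    ∃ y, y ∈ J.carrier ∧ y ∈ K.carrier := by
  rw [mem_cd J.b, cd_self] at h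
  have hb := cd_pos (p := J.b) J.ne
  have h1 := cd_nonneg J.b K.a
  have h2 := cd_nonneg J.b K.b
  have hm : max (cd J.b J.a) (cd J.b K.a) < 1 := max_lt (cd_lt_one _ _) (cd_lt_one _ _)
  obtain ⟨r, hr, hr'⟩ := exists_between hm
  have hlt := max_lt_iff.1 hr
  obtain ⟨y, rfl⟩ := exists_cd J.b (r := r) (by linarith) hr'
  refine ⟨y, (mem_cd J.b _ _).2 ?_, (mem_cd J.b _ _).2 ?_⟩
  · rw [cd_self]; grind
  · right; right; refine ⟨?_, hlt.2⟩; grind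

theorem dual_subset {I K : GoodInt} (h : I.carrier ⊆ K.carrier) :
    K.dual.carrier ⊆ I.dual.carrier := by
  intro y hy
  refine (mem_dual I y).2 ⟨fun hI => ((mem_dual K y).1 hy).1 (h hI), ?_, ?_⟩
  · rintro rfl
    obtain ⟨z, hz, hz'⟩ := meet_of_a_mem hy
    exact ((mem_dual K z).1 hz').1 (h hz)
  · rintro rfl
    obtain ⟨z, hz, hz'⟩ := meet_of_b_mem hy
    exact ((mem_dual K z).1 hz').1 (h hz)

/-- Disjointness suffices: an open interval disjoint from `K` also misses the endpoints of `K`. -/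
theorem subset_dual_iff {I K : GoodInt} :
    I.carrier ⊆ K.dual.carrier ↔ Disjoint I.carrier K.carrier := by
  rw [Set.disjoint_left]
  constructor
  · intro h y hy; exact ((mem_dual K y).1 (h hy)).1
  · intro h y hy
    refine (mem_dual K y).2 ⟨h hy, ?_, ?_⟩
    · rintro rfl
      obtain ⟨z, hz, hz'⟩ := meet_of_a_mem hy
      exact h hz' hz
    · rintro rfl
      obtain ⟨z, hz, hz'⟩ := meet_of_b_mem hy
      exact h hz' hz

/-- Two intervals of a lamination that miss a common point `z`, interior to the dual of the first,
are nested or disjoint. -/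
theorem laminar {L : LamSys} {I K : GoodInt} (hI : I ∈ L.mem) (hK : K ∈ L.mem) {z : S1}
    (hz : z ∈ I.dual.carrier) (hzK : z ∉ K.carrier) :
    I.carrier ⊆ K.carrier ∨ K.carrier ⊆ I.carrier ∨ Disjoint I.carrier K.carrier := by
  rcases L.unlinked I hI K hK with h | h | h | h
  · exact Or.inl h
  · exact absurd (h hz) hzK
  · exact Or.inr (Or.inr (subset_dual_iff.1 h))
  · exact Or.inr (Or.inl (dual_subset h))

/-! ### Unions of chains and maximal gaps -/

/-- The union of an ascending sequence of intervals of `L` missing `p` is either an interval of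
`L` or the whole circle minus `p`. -/
theorem chain_union (L : LamSys) (p : S1) (c : ℕ → GoodInt) (hc : ∀ n, c n ∈ L.mem)
    (hp : ∀ n, p ∉ (c n).carrier) (hasc : ∀ n, (c n).carrier ⊆ (c (n + 1)).carrier) :
    (∃ K ∈ L.mem, K.carrier = ⋃ n, (c n).carrier) ∨ (⋃ n, (c n).carrier) = {p}ᶜ := by
  have hmono : Monotone fun n => (c n).carrier := monotone_nat_of_le_succ hasc
  have hb1 : BddBelow (range fun n => lo p (c n)) := ⟨0, by rintro _ ⟨n, rfl⟩; exact lo_nonneg _ _⟩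
  have hb2 : BddAbove (range fun n => hi p (c n)) := ⟨1, by rintro _ ⟨n, rfl⟩; exact hi_le_one _ _⟩
  set l := ⨅ n, lo p (c n) with hl
  set h := ⨆ n, hi p (c n) with hh
  have key : ∀ y, y ∈ (⋃ n, (c n).carrier) ↔ l < cd p y ∧ cd p y < h := by
    intro y
    rw [mem_iUnion]
    constructor
    · rintro ⟨n, hn⟩
      rw [mem_lohi (hp n)] at hn
      exact ⟨(ciInf_le hb1 n).trans_lt hn.1, hn.2.trans_le (le_ciSup hb2 n)⟩
    · rintro ⟨h1, h2⟩
      obtain ⟨m, hm⟩ := exists_lt_of_ciInf_lt h1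
      obtain ⟨n, hn⟩ := exists_lt_of_lt_ciSup h2
      refine ⟨max m n, (mem_lohi (hp _) y).2 ⟨?_, ?_⟩⟩
      · exact ((subset_iff (hp m) (hp _)).1 (hmono (le_max_left m n))).1.trans_lt hm
      · exact hn.trans_le ((subset_iff (hp n) (hp _)).1 (hmono (le_max_right m n))).2
  by_cases hne : l = 0 ∧ h = 1
  · right
    ext y
    rw [key, hne.1, hne.2]
    constructor
    · rintro ⟨h1, -⟩ rfl; rw [cd_self] at h1; exact h1.false
    · intro hy; exact ⟨cd_pos hy, cd_lt_one _ _⟩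
  · left
    have hl0 : 0 ≤ l := le_ciInf fun n => lo_nonneg _ _
    have hh1 : h ≤ 1 := ciSup_le fun n => hi_le_one _ _
    have hlh : l < h := (ciInf_le hb1 0).trans_lt ((lo_lt_hi (hp 0)).trans_le (le_ciSup hb2 0))
    obtain ⟨K, hK, hK1, hK2⟩ := exists_int p hl0 hlh hh1 hne
    have e : K.carrier = ⋃ n, (c n).carrier := by
      ext y; rw [key, mem_lohi hK, hK1, hK2]
    exact ⟨K, L.chain_closed c hc hasc K e, e⟩

/-- The maximal elements of a laminar, chain-complete family of intervals that sees every leaf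
form a gap. -/
theorem exists_max_gap (L : LamSys) (p : S1) (B : Set GoodInt) (hBL : B ⊆ L.mem)
    (hp : ∀ J ∈ B, p ∉ J.carrier)
    (hlam : ∀ I ∈ B, ∀ J ∈ B,
      I.carrier ⊆ J.carrier ∨ J.carrier ⊆ I.carrier ∨ Disjoint I.carrier J.carrier)
    (hsee : ∀ I ∈ L.mem, ∃ J ∈ B, I.carrier ⊆ J.carrier ∨ I.dual.carrier ⊆ J.carrier)
    (hchain : ∀ c : ℕ → GoodInt, (∀ n, c n ∈ B) →
      (∀ n, (c n).carrier ⊆ (c (n + 1)).carrier) → ∃ M ∈ B, ∀ n, (c n).carrier ⊆ M.carrier) :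
    ∃ G, L.IsGap G ∧ G ⊆ B ∧ (∀ J ∈ B, ∃ M ∈ G, J.carrier ⊆ M.carrier) ∧
      ∀ M ∈ G, ∀ J ∈ B, M.carrier ⊆ J.carrier → M = J := by
  set G : Set GoodInt := {M | M ∈ B ∧ ∀ J ∈ B, M.carrier ⊆ J.carrier → M = J} with hG
  have hmax : ∀ J ∈ B, ∃ M ∈ G, J.carrier ⊆ M.carrier := by
    intro I hI
    -- an ascending sequence above `I` whose lengths approach their supremum
    set T : Set GoodInt := {J | J ∈ B ∧ I.carrier ⊆ J.carrier} with hT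
    set len : GoodInt → ℝ := fun J => hi p J - lo p J with hlen
    have hne : (len '' T).Nonempty := ⟨_, I, ⟨hI, subset_rfl⟩, rfl⟩
    have hbd : BddAbove (len '' T) := by
      refine ⟨1, ?_⟩
      rintro _ ⟨J, -, rfl⟩
      have := hi_le_one p J
      have := lo_nonneg p J
      simp only [hlen]; linarith
    obtain ⟨u, hu, hlim, huT⟩ := exists_seq_tendsto_sSup hne hbd
    choose c hcT hcu using huT
    have hcB : ∀ n, c n ∈ B := fun n => (hcT n).1
    have hlenmono : ∀ J ∈ B, ∀ K ∈ B, J.carrier ⊆ K.carrier → len K ≤ len J → J = K := by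
      intro J hJ K hK h hle
      have := (subset_iff (hp J hJ) (hp K hK)).1 h
      simp only [hlen] at hle
      exact ext_lohi (p := p) (by linarith) (by linarith)
    have hasc : ∀ n, (c n).carrier ⊆ (c (n + 1)).carrier := by
      intro n
      rcases hlam _ (hcB n) _ (hcB (n + 1)) with h | h | h
      · exact h
      · have : c (n + 1) = c n := hlenmono _ (hcB _) _ (hcB _) h (by
          rw [hcu, hcu]; exact hu (Nat.le_succ n))
        rw [this]
      · obtain ⟨y, hy⟩ := exists_mem I
        exact absurd ((hcT (n + 1)).2 hy) (Set.disjoint_left.1 h ((hcT n).2 hy))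
    obtain ⟨M, hMB, hM⟩ := hchain c hcB hasc
    have hIM : I.carrier ⊆ M.carrier := (hcT 0).2.trans (hM 0)
    have hsup : sSup (len '' T) ≤ len M := by
      refine le_of_tendsto' hlim fun n => ?_
      rw [← hcu]
      have := (subset_iff (hp _ (hcB n)) (hp M hMB)).1 (hM n)
      simp only [hlen]; linarith
    refine ⟨M, ⟨hMB, fun J hJ h => hlenmono M hMB J hJ h ?_⟩, hIM⟩
    exact (le_csSup hbd ⟨J, ⟨hJ, hIM.trans h⟩, rfl⟩).trans hsup
  refine ⟨G, ⟨fun M hM => hBL hM.1, ?_, ?_⟩, fun M hM => hM.1, hmax, fun M hM => hM.2⟩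
  · intro I hI J hJ hne
    rcases hlam I hI.1 J hJ.1 with h | h | h
    · exact absurd (hI.2 J hJ.1 h) hne
    · exact absurd (hJ.2 I hI.1 h).symm hne
    · exact h
  · intro I hI
    obtain ⟨J, hJ, h⟩ := hsee I hI
    obtain ⟨M, hM, hJM⟩ := hmax J hJ
    exact ⟨M, hM, h.imp (·.trans hJM) (·.trans hJM)⟩

theorem mem_E {L : LamSys} {x : S1} : x ∈ L.E ↔ ∃ I ∈ L.mem, x = I.a ∨ x = I.b := by
  simp [LamSys.E, GoodInt.verts]

theorem mem_dual_of_notMem_E {L : LamSys} {q : S1} (hq : q ∉ L.E) {I : GoodInt} (hI : I ∈ L.mem)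
    (h : q ∉ I.carrier) : q ∈ I.dual.carrier :=
  (mem_dual I q).2 ⟨h, fun e => hq (mem_E.2 ⟨I, hI, Or.inl e⟩),
    fun e => hq (mem_E.2 ⟨I, hI, Or.inr e⟩)⟩

theorem mem_gapVerts {G : Set GoodInt} {x : S1} : x ∈ gapVerts G ↔ ∀ I ∈ G, x ∉ I.carrier := by
  simp [gapVerts]

/-- A point off the endpoint set is a rainbow point or a vertex of a gap. -/
theorem rainbow_or_vertex (L : LamSys) {q : S1} (hq : q ∉ L.E) :
    L.IsRainbowPt q ∨ ∃ G, L.IsGap G ∧ q ∈ gapVerts G := by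
  by_cases hch : ∀ c : ℕ → GoodInt, (∀ n, c n ∈ {J | J ∈ L.mem ∧ q ∉ J.carrier}) →
      (∀ n, (c n).carrier ⊆ (c (n + 1)).carrier) →
      ∃ M ∈ {J | J ∈ L.mem ∧ q ∉ J.carrier}, ∀ n, (c n).carrier ⊆ M.carrier
  · right
    obtain ⟨G, hG, hGB, -⟩ := exists_max_gap L q {J | J ∈ L.mem ∧ q ∉ J.carrier}
      (fun J hJ => hJ.1) (fun J hJ => hJ.2)
      (fun I hI J hJ => laminar hI.1 hJ.1 (mem_dual_of_notMem_E hq hI.1 hI.2) hJ.2)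
      (fun I hI => by
        by_cases h : q ∈ I.carrier
        · exact ⟨I.dual, ⟨L.dual_mem I hI, fun h' => ((mem_dual I q).1 h').1 h⟩,
            Or.inr subset_rfl⟩
        · exact ⟨I, ⟨hI, h⟩, Or.inl subset_rfl⟩) hch
    exact ⟨G, hG, mem_gapVerts.2 fun I hI => (hGB hI).2⟩
  · left
    push Not at hch
    obtain ⟨c, hc, hasc, hno⟩ := hch
    have hmono : Monotone fun n => (c n).carrier := monotone_nat_of_le_succ hasc
    have hun : (⋃ n, (c n).carrier) = {q}ᶜ := by
      rcases chain_union L q c (fun n => (hc n).1) (fun n => (hc n).2) hasc with ⟨K, hK, e⟩ | h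
      · exfalso
        obtain ⟨n, hn⟩ := hno K ⟨hK, fun h => by
          rw [e, mem_iUnion] at h
          obtain ⟨n, hn⟩ := h
          exact (hc n).2 hn⟩
        exact hn (e ▸ subset_iUnion (fun n => (c n).carrier) n)
      · exact h
    -- the chain never stabilises, so a subsequence is strictly ascending
    have hstep : ∀ n, ∃ m, n < m ∧ (c n).carrier ⊂ (c m).carrier := by
      intro n
      obtain ⟨m, hm⟩ := hno (c n) (hc n)
      have hnm : n < m := by
        by_contra! h
        exact hm (hmono h)
      exact ⟨m, hnm, hmono hnm.le, hm⟩
    choose f hf1 hf2 using hstep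
    set φ : ℕ → ℕ := fun k => f^[k] 0 with hφ
    have hφs : ∀ k, φ (k + 1) = f (φ k) := fun k => Function.iterate_succ_apply' f k 0
    have hφm : StrictMono φ := strictMono_nat_of_lt_succ fun k => by rw [hφs]; exact hf1 _
    refine ⟨fun k => (c (φ k)).dual, fun k => L.dual_mem _ (hc _).1, fun k => ?_, ?_⟩
    · refine ⟨dual_subset (by rw [hφs]; exact (hf2 _).1), fun h => ?_⟩
      have := dual_subset h
      rw [dual_dual, dual_dual, hφs] at this
      exact (hf2 (φ k)).2 this
    · ext y
      rw [mem_iInter, mem_singleton_iff]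
      constructor
      · intro h
        by_contra hy
        have : y ∈ ⋃ n, (c n).carrier := by rw [hun]; exact hy
        obtain ⟨n, hn⟩ := mem_iUnion.1 this
        exact ((mem_dual _ y).1 (h n)).1 (hmono (hφm.id_le n) hn)
      · rintro rfl k
        exact mem_dual_of_notMem_E hq (hc _).1 (hc _).2

/-! ### Tips, pivots and density of endpoints -/

/-- Points slightly before `v` (clockwise side) avoid `S`. -/
def LeftFree (v : S1) (S : Set S1) : Prop := ∃ r < 1, ∀ y, r < cd v y → y ∉ S

/-- Points slightly after `v` (counterclockwise side) avoid `S`. -/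
def RightFree (v : S1) (S : Set S1) : Prop := ∃ r > 0, ∀ y, 0 < cd v y → cd v y < r → y ∉ S

theorem leftFree_of_finite {S : Set S1} (hS : S.Finite) (v : S1) : LeftFree v S := by
  have h : ∀ᶠ r in 𝓝[<] (1 : ℝ), ∀ y ∈ S, cd v y < r :=
    (eventually_all_finite hS).2 fun y _ =>
      mem_nhdsWithin_of_mem_nhds (Ioi_mem_nhds (cd_lt_one v y))
  obtain ⟨r, hr, hr1⟩ := (h.and self_mem_nhdsWithin).exists
  exact ⟨r, hr1, fun y hy hyS => (hr y hyS).not_gt hy⟩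

theorem rightFree_of_finite {S : Set S1} (hS : S.Finite) (v : S1) : RightFree v S := by
  have h : ∀ᶠ r in 𝓝[>] (0 : ℝ), ∀ y ∈ S, 0 < cd v y → r < cd v y := by
    refine (eventually_all_finite hS).2 fun y _ => ?_
    by_cases hy : 0 < cd v y
    · filter_upwards [mem_nhdsWithin_of_mem_nhds (Iio_mem_nhds hy)] with r hr _ using hr
    · exact Eventually.of_forall fun r h => absurd h hy
  obtain ⟨r, hr, hr1⟩ := (h.and self_mem_nhdsWithin).exists
  exact ⟨r, hr1, fun y hy hy' hyS => (hr y hyS hy).not_gt hy'⟩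

/-- Neighbourhoods in the circle in terms of the coordinate: the complement stays away from `v` on
both sides. -/
theorem mem_nhds_iff_cd {v : S1} {U : Set S1} : U ∈ 𝓝 v ↔
    v ∈ U ∧ LeftFree v Uᶜ ∧ RightFree v Uᶜ := by
  have hmap : 𝓝 v = map (fun r : ℝ => v + (r : S1)) (𝓝 0) := by
    have h0 : 𝓝 (0 : S1) = map (fun r : ℝ => (r : S1)) (𝓝 0) := by
      exact QuotientAddGroup.nhds_eq (AddSubgroup.zmultiples (1 : ℝ)) 0
    have h1 : 𝓝 v = map (fun x => v + x) (𝓝 0) := by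
      rw [map_add_left_nhds, add_zero]
    rw [h1, h0, map_map]; rfl
  rw [hmap, mem_map, Metric.mem_nhds_iff]
  simp only [LeftFree, RightFree, mem_compl_iff, not_not]
  have hneg : ∀ y, v + ((cd v y - 1 : ℝ) : S1) = y := by
    intro y
    have h1 : ((1 : ℝ) : S1) = 0 := AddCircle.coe_period 1
    rw [AddCircle.coe_sub, h1, sub_zero, add_cd]
  constructor
  · rintro ⟨ε, hε, h⟩
    refine ⟨?_, ⟨1 - ε, by linarith, fun y hy => ?_⟩, ⟨ε, hε, fun y hy hy' => ?_⟩⟩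
    · simpa using h (Metric.mem_ball_self hε)
    · have := cd_lt_one v y
      have hm := @h (cd v y - 1) (by
        rw [Metric.mem_ball, Real.dist_eq, abs_lt]; constructor <;> linarith)
      rwa [mem_preimage, hneg] at hm
    · have hm := @h (cd v y) (by
        rw [Metric.mem_ball, Real.dist_eq, abs_lt]; constructor <;> linarith)
      rwa [mem_preimage, add_cd] at hm
  · rintro ⟨hv, ⟨r, hr, h1⟩, ⟨s, hs, h2⟩⟩
    refine ⟨min 1 (min (1 - r) s), by
      refine lt_min one_pos (lt_min ?_ hs); linarith, fun x hx => ?_⟩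
    rw [Metric.mem_ball, Real.dist_eq, sub_zero, lt_min_iff, lt_min_iff, abs_lt, abs_lt, abs_lt]
      at hx
    obtain ⟨⟨ha, hb⟩, ⟨hc, hd⟩, he, hf⟩ := hx
    rw [mem_preimage]
    rcases lt_trichotomy x 0 with h | rfl | h
    · have e : cd v (v + ((x : ℝ) : S1)) = x + 1 := by
        have h3 : v + ((x : ℝ) : S1) = v + ((x + 1 : ℝ) : S1) := by
          rw [AddCircle.coe_add]
          have h4 : ((1 : ℝ) : S1) = 0 := AddCircle.coe_period 1
          rw [h4, add_zero]
        rw [h3]; exact cd_add (by linarith) (by linarith)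
      exact h1 _ (by rw [e]; linarith)
    · simpa using hv
    · have e := cd_add (p := v) h.le hb
      exact h2 _ (by rw [e]; exact h) (by rw [e]; exact hf)

theorem isTipOf_iff {t : S1} {G : Set GoodInt} : IsTipOf t G ↔
    t ∈ gapVerts G ∧ LeftFree t (gapVerts G) ∧ RightFree t (gapVerts G) := by
  unfold IsTipOf
  refine and_congr_right fun ht => ?_
  rw [closure_eq_compl_interior_compl, notMem_compl_iff, mem_interior_iff_mem_nhds,
    mem_nhds_iff_cd, compl_compl]
  constructor
  · rintro ⟨-, ⟨r, hr, h⟩, ⟨s, hs, h'⟩⟩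
    refine ⟨⟨max r 0, max_lt hr one_pos, fun y hy hyG => ?_⟩, ⟨s, hs, fun y hy hys hyG => ?_⟩⟩
    · refine h y (lt_of_le_of_lt (le_max_left _ _) hy) ⟨hyG, ?_⟩
      rintro rfl
      rw [cd_self] at hy
      exact (lt_of_le_of_lt (le_max_right r 0) hy).false
    · refine h' y hy hys ⟨hyG, ?_⟩
      rintro rfl
      rw [cd_self] at hy
      exact hy.false
  · rintro ⟨⟨r, hr, h⟩, ⟨s, hs, h'⟩⟩
    exact ⟨fun hm => hm.2 rfl, ⟨r, hr, fun y hy hm => h y hy hm.1⟩,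
      ⟨s, hs, fun y hy hy' hm => h' y hy hy' hm.1⟩⟩

theorem isOpen_carrier (I : GoodInt) : IsOpen I.carrier := by
  rw [isOpen_iff_mem_nhds]
  intro v hv
  have hv' := hv
  rw [mem_cd v, cd_self] at hv'
  have h1 := cd_nonneg v I.a
  have h2 := cd_nonneg v I.b
  refine mem_nhds_iff_cd.2 ⟨hv, ⟨cd v I.a, cd_lt_one _ _, fun y hy => ?_⟩,
    ⟨cd v I.b, by grind, fun y hy hy' => ?_⟩⟩
  · rw [notMem_compl_iff, mem_cd v]; grind
  · rw [notMem_compl_iff, mem_cd v]; grind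

theorem notMem_closure_of_mem_dual {I : GoodInt} {w : S1} (hw : w ∈ I.dual.carrier) :
    w ∉ closure I.carrier := by
  intro h
  obtain ⟨y, hy, hy'⟩ := mem_closure_iff.1 h _ (isOpen_carrier I.dual) hw
  exact ((mem_dual I y).1 hy).1 hy'

section Gaps

variable {L : LamSys} {G : Set GoodInt}

theorem a_mem_gapVerts (hG : L.IsGap G) {J : GoodInt} (hJ : J ∈ G) : J.a ∈ gapVerts G := by
  refine mem_gapVerts.2 fun K hK h => ?_
  by_cases e : J = K
  · subst e; exact a_notMem J h
  · obtain ⟨y, hy, hy'⟩ := meet_of_a_mem h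
    exact Set.disjoint_left.1 (hG.2.1 J hJ K hK e) hy hy'

theorem b_mem_gapVerts (hG : L.IsGap G) {J : GoodInt} (hJ : J ∈ G) : J.b ∈ gapVerts G := by
  refine mem_gapVerts.2 fun K hK h => ?_
  by_cases e : J = K
  · subst e; exact b_notMem J h
  · obtain ⟨y, hy, hy'⟩ := meet_of_b_mem h
    exact Set.disjoint_left.1 (hG.2.1 J hJ K hK e) hy hy'

/-- A vertex free on its left is the terminal endpoint of an element of the gap. -/
theorem left_neighbor (hG : L.IsGap G) {v : S1} (hv : v ∈ gapVerts G)
    (hf : LeftFree v (gapVerts G)) : ∃ J ∈ G, J.b = v := by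
  obtain ⟨r, hr, h⟩ := hf
  obtain ⟨s, hs, hs1⟩ := exists_between (max_lt hr one_pos)
  obtain ⟨hs0, hs0'⟩ := max_lt_iff.1 hs
  obtain ⟨y, rfl⟩ := exists_cd v (r := s) hs0'.le hs1
  have hy := h y hs0
  simp only [mem_gapVerts, not_forall, not_not] at hy
  obtain ⟨J, hJ, hyJ⟩ := hy
  have hvJ := mem_gapVerts.1 hv J hJ
  refine ⟨J, hJ, ?_⟩
  by_contra hb
  have h2 := ((mem_lohi hvJ y).1 hyJ).2
  rw [hi_eq_cd hb] at h2
  exact h J.b (hs0.trans h2) (b_mem_gapVerts hG hJ)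

/-- A vertex free on its right is the initial endpoint of an element of the gap. -/
theorem right_neighbor (hG : L.IsGap G) {v : S1} (hv : v ∈ gapVerts G)
    (hf : RightFree v (gapVerts G)) : ∃ J ∈ G, J.a = v := by
  obtain ⟨r, hr, h⟩ := hf
  obtain ⟨s, hs, hs1⟩ := exists_between (lt_min hr one_pos)
  obtain ⟨hs0, hs0'⟩ := lt_min_iff.1 hs1
  obtain ⟨y, rfl⟩ := exists_cd v (r := s) hs.le hs0'
  have hy := h y hs hs0
  simp only [mem_gapVerts, not_forall, not_not] at hy
  obtain ⟨J, hJ, hyJ⟩ := hy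
  have hvJ := mem_gapVerts.1 hv J hJ
  refine ⟨J, hJ, ?_⟩
  by_contra hb
  have h2 := ((mem_lohi hvJ y).1 hyJ).1
  exact h J.a (cd_pos hb) (h2.trans hs0) (a_mem_gapVerts hG hJ)

theorem a_mem_E {I : GoodInt} (hI : I ∈ L.mem) : I.a ∈ L.E := mem_E.2 ⟨I, hI, Or.inl rfl⟩

theorem b_mem_E {I : GoodInt} (hI : I ∈ L.mem) : I.b ∈ L.E := mem_E.2 ⟨I, hI, Or.inr rfl⟩

theorem crown_mem {t : ℤ → S1} {p : S1} (hc : IsCrownWith G t p) (k : ℤ) :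
    ∃ J ∈ G, J.a = t k ∧ J.b = t (k + 1) := by
  obtain ⟨-, hne, rfl, -⟩ := hc
  exact ⟨⟨t k, t (k + 1), hne k⟩, ⟨k, rfl, rfl⟩, rfl, rfl⟩

theorem crown_free {t : ℤ → S1} {p : S1} (hc : IsCrownWith G t p) (k : ℤ) :
    LeftFree (t k) (gapVerts G) ∧ RightFree (t k) (gapVerts G) := by
  constructor
  · obtain ⟨J, hJ, ha, hb⟩ := crown_mem hc (k - 1)
    rw [sub_add_cancel] at hb
    refine ⟨cd (t k) J.a, cd_lt_one _ _, fun y hy h => mem_gapVerts.1 h J hJ ?_⟩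
    rw [mem_cd (t k), hb, cd_self]
    have := cd_pos (p := t k) (x := J.a) (hb ▸ J.ne)
    grind
  · obtain ⟨J, hJ, ha, hb⟩ := crown_mem hc k
    refine ⟨cd (t k) J.b, cd_pos (ha ▸ J.ne.symm), fun y hy hy' h => mem_gapVerts.1 h J hJ ?_⟩
    rw [mem_cd (t k), ha, cd_self]
    exact Or.inl ⟨hy, hy'⟩

/-- Vertices of a crown accumulate at its pivot. -/
theorem pivot_not_leftFree (hG : L.IsGap G) {t : ℤ → S1} {p : S1} (hc : IsCrownWith G t p) :
    ¬ LeftFree p (gapVerts G) := by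
  intro hf
  obtain ⟨hp, hne, hGe, hv⟩ := hc
  obtain ⟨J, hJ, hb⟩ := left_neighbor hG (v := p) (by rw [hv]; right; rfl) hf
  rw [hGe] at hJ
  obtain ⟨k, -, hk⟩ := hJ
  exact hp (k + 1) (hb.symm.trans hk)

/-- In a quite full system every vertex of a gap is isolated from both sides, except for the pivot
of a crown. -/
theorem tip_or_pivot (hQ : L.QuiteFull) (hG : L.IsGap G) {v : S1} (hv : v ∈ gapVerts G) :
    IsTipOf v G ∨ IsPivotOf v G := by
  rcases hQ G hG with hf | ⟨t, p, hc⟩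
  · exact Or.inl (isTipOf_iff.2 ⟨hv, leftFree_of_finite hf v, rightFree_of_finite hf v⟩)
  · have hv' := hv
    rw [hc.2.2.2] at hv'
    rcases hv' with ⟨k, rfl⟩ | rfl
    · exact Or.inl (isTipOf_iff.2 ⟨hv, crown_free hc k⟩)
    · exact Or.inr ⟨t, hc⟩

theorem tip_neighbors (hG : L.IsGap G) {v : S1} (h : IsTipOf v G) :
    (∃ J ∈ G, J.a = v) ∧ ∃ J ∈ G, J.b = v := by
  obtain ⟨hv, hl, hr⟩ := isTipOf_iff.1 h
  exact ⟨right_neighbor hG hv hr, left_neighbor hG hv hl⟩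

/-- A gap vertex off the endpoint set cannot be a tip, as tips are endpoints of elements of the
gap. -/
theorem rainbow_or_pivot (hQ : L.QuiteFull) {q : S1} (hq : q ∉ L.E) :
    L.IsRainbowPt q ∨ ∃ G, L.IsGap G ∧ IsPivotOf q G := by
  refine (rainbow_or_vertex L hq).imp_right ?_
  rintro ⟨G, hG, hv⟩
  rcases tip_or_pivot hQ hG hv with h | h
  · obtain ⟨⟨J, hJ, rfl⟩, -⟩ := tip_neighbors hG h
    exact absurd (a_mem_E (hG.1 hJ)) hq
  · exact ⟨G, hG, h⟩

/-- Endpoints of a quite full lamination system are dense. -/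
theorem dense_E (hQ : L.QuiteFull) (I : GoodInt) : ∃ w ∈ I.carrier, w ∈ L.E := by
  obtain ⟨q, hq⟩ := exists_mem I
  by_cases hqE : q ∈ L.E
  · exact ⟨q, hq, hqE⟩
  rw [mem_cd q, cd_self] at hq
  have h1 := cd_nonneg q I.a
  have h2 := cd_nonneg q I.b
  have hba : cd q I.b < cd q I.a := by grind
  have key : ∀ y, cd q I.a < cd q y → y ∈ I.carrier := fun y hy => by
    rw [mem_cd q]; exact Or.inr (Or.inr ⟨hba, hy⟩)
  rcases rainbow_or_pivot hQ hqE with ⟨c, hc, -, hInt⟩ | ⟨G, hG, t, ht⟩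
  · obtain ⟨r, hr, hr1⟩ := exists_between (cd_lt_one q I.a)
    obtain ⟨x, rfl⟩ := exists_cd q (r := r) (by linarith) hr1
    have hx : x ∉ ⋂ n, (c n).carrier := by
      rw [hInt]
      rintro rfl
      rw [cd_self] at hr
      linarith
    simp only [mem_iInter, not_forall] at hx
    obtain ⟨n, hn⟩ := hx
    have hqn : q ∈ (c n).carrier := by
      have : q ∈ ⋂ n, (c n).carrier := by rw [hInt]; rfl
      exact mem_iInter.1 this n
    refine ⟨(c n).a, key _ ?_, a_mem_E (hc n)⟩
    rw [mem_cd q] at hn hqn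
    rw [cd_self] at hqn
    have h3 := cd_nonneg q (c n).a
    have h4 := cd_nonneg q (c n).b
    grind
  · by_contra! hno
    refine pivot_not_leftFree hG ht ⟨cd q I.a, cd_lt_one _ _, fun y hy hyG => ?_⟩
    rw [ht.2.2.2] at hyG
    rcases hyG with ⟨k, rfl⟩ | rfl
    · obtain ⟨J, hJ, ha, -⟩ := crown_mem ht k
      exact hno _ (key _ hy) (ha ▸ a_mem_E (hG.1 hJ))
    · rw [cd_self] at hy; linarith

theorem leaf_isGap {I : GoodInt} (hI : I ∈ L.mem) : L.IsGap {I, I.dual} := by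
  have hd : Disjoint I.carrier I.dual.carrier :=
    Set.disjoint_left.2 fun y hy hy' => ((mem_dual I y).1 hy').1 hy
  refine ⟨?_, ?_, ?_⟩
  · rintro J (rfl | rfl)
    exacts [hI, L.dual_mem _ hI]
  · rintro J (rfl | rfl) K (rfl | rfl) h
    exacts [absurd rfl h, hd, hd.symm, absurd rfl h]
  · intro J hJ
    rcases L.unlinked J hJ I hI with h | h | h | h
    exacts [⟨I, by simp, Or.inl h⟩, ⟨I, by simp, Or.inr h⟩, ⟨I.dual, by simp, Or.inl h⟩,
      ⟨I.dual, by simp, Or.inr h⟩]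

theorem mem_leaf_gapVerts {I : GoodInt} {v : S1} :
    v ∈ gapVerts {I, I.dual} ↔ v = I.a ∨ v = I.b := by
  simp only [mem_gapVerts, mem_insert_iff, mem_singleton_iff, forall_eq_or_imp, forall_eq,
    mem_dual]
  constructor
  · rintro ⟨h1, h2⟩; by_contra! h; exact h2 ⟨h1, h⟩
  · rintro (rfl | rfl)
    · exact ⟨a_notMem I, by simp⟩
    · exact ⟨b_notMem I, by simp⟩

/-- The two sides of a leaf leave no room for a further element of a gap. -/
theorem eq_leaf_of_mem (hG : L.IsGap G) {I : GoodInt} (h1 : I ∈ G) (h2 : I.dual ∈ G) :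
    G = {I, I.dual} := by
  refine Subset.antisymm (fun J hJ => ?_) ?_
  · by_contra h
    simp only [mem_insert_iff, mem_singleton_iff, not_or] at h
    have d1 := Set.disjoint_left.1 (hG.2.1 J hJ I h1 h.1)
    have d2 := Set.disjoint_left.1 (hG.2.1 J hJ I.dual h2 h.2)
    refine carrier_infinite J ((Set.toFinite {I.a, I.b}).subset fun y hy => ?_)
    have := d2 hy
    rw [mem_dual] at this
    by_contra hn
    simp only [mem_insert_iff, mem_singleton_iff, not_or] at hn
    exact this ⟨d1 hy, hn.1, hn.2⟩
  · rintro J (rfl | rfl)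
    exacts [h1, h2]

end Gaps

/-! ### Isolated elements and leaves with a common endpoint -/

section Isolation

variable {L : LamSys}

/-- An isolated element `I` bounds a non-leaf gap on its own side, formed by `I.dual` and the
maximal elements properly contained in `I`. -/
theorem exists_gap_of_isolated {I : GoodInt} (hI : I ∈ L.mem) (hiso : ¬ L.HasSideSeq I) :
    ∃ N, L.IsGap N ∧ ¬ IsLeafGap N ∧ I.dual ∈ N := by
  obtain ⟨z, hz⟩ := exists_mem I.dual
  have hzI : z ∉ I.carrier := ((mem_dual I z).1 hz).1
  set B : Set GoodInt := {J | (J ∈ L.mem ∧ J.carrier ⊂ I.carrier) ∨ J = I.dual} with hB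
  have hBL : B ⊆ L.mem := by
    rintro J (h | rfl)
    exacts [h.1, L.dual_mem I hI]
  have hp : ∀ J ∈ B, I.a ∉ J.carrier := by
    rintro J (h | rfl) hm
    · exact a_notMem I (h.2.1 hm)
    · exact b_notMem I.dual hm
  have hdis : ∀ J : GoodInt, J.carrier ⊂ I.carrier → Disjoint J.carrier I.dual.carrier :=
    fun J h => Set.disjoint_left.2 fun y hy hy' => ((mem_dual I y).1 hy').1 (h.1 hy)
  have hchain : ∀ c : ℕ → GoodInt, (∀ n, c n ∈ B) →
      (∀ n, (c n).carrier ⊆ (c (n + 1)).carrier) → ∃ M ∈ B, ∀ n, (c n).carrier ⊆ M.carrier := by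
    intro c hc hasc
    have hmono : Monotone fun n => (c n).carrier := monotone_nat_of_le_succ hasc
    by_cases hd : ∃ n, c n = I.dual
    · obtain ⟨n, hn⟩ := hd
      refine ⟨I.dual, Or.inr rfl, fun m => ?_⟩
      rcases le_total m n with h | h
      · exact hn ▸ hmono h
      · rcases hc m with h' | h'
        · exfalso
          obtain ⟨y, hy⟩ := exists_mem I.dual
          have h1 : y ∈ (c m).carrier := hmono h (by simpa only [hn] using hy)
          exact Set.disjoint_left.1 (hdis _ h'.2) h1 hy
        · rw [h']
    · push Not at hd
      have hc' : ∀ n, c n ∈ L.mem ∧ (c n).carrier ⊂ I.carrier :=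
        fun n => (hc n).resolve_right (hd n)
      have hUI : (⋃ n, (c n).carrier) ⊆ I.carrier := iUnion_subset fun n => (hc' n).2.1
      rcases chain_union L I.a c (fun n => (hc' n).1) (fun n => hp _ (hc n)) hasc with
        ⟨K, hK, e⟩ | h
      · refine ⟨K, Or.inl ⟨hK, e ▸ hUI, fun h => hiso ?_⟩,
          fun n => e ▸ subset_iUnion (fun n => (c n).carrier) n⟩
        -- the chain exhausts `I`, so it is itself an `I`-side sequence
        refine ⟨c, fun n => (hc' n).1, fun n => ?_, fun n => Or.inl (hc' n).2.1, c,
          fun n => Or.inl rfl, fun y hy => ?_, fun y hy => ?_⟩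
        · rintro (h' | h')
          · exact (hc' n).2.2 (h' ▸ subset_rfl)
          · exact hd n h'
        · rw [mem_liminf_iff_eventually_mem]
          have hy' := h hy
          rw [e] at hy'
          obtain ⟨n, hn⟩ := mem_iUnion.1 hy'
          exact eventually_atTop.2 ⟨n, fun m hm => hmono hm hn⟩
        · rw [mem_limsup_iff_frequently_mem] at hy
          obtain ⟨n, hn⟩ := hy.exists
          exact subset_closure ((hc' n).2.1 hn)
      · exfalso
        have : z ∈ ⋃ n, (c n).carrier := by
          rw [h]; rintro rfl; exact b_notMem I.dual hz
        exact hzI (hUI this)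
  have hlam : ∀ J ∈ B, ∀ K ∈ B,
      J.carrier ⊆ K.carrier ∨ K.carrier ⊆ J.carrier ∨ Disjoint J.carrier K.carrier := by
    rintro J (hJ | rfl) K (hK | rfl)
    · exact laminar hJ.1 hK.1 (dual_subset hJ.2.1 hz) fun h => hzI (hK.2.1 h)
    · exact Or.inr (Or.inr (hdis J hJ.2))
    · exact Or.inr (Or.inr (hdis K hK.2).symm)
    · exact Or.inl subset_rfl
  have hside : ∀ J ∈ L.mem, J.carrier ⊆ I.carrier →
      ∃ M ∈ B, J.carrier ⊆ M.carrier ∨ J.dual.carrier ⊆ M.carrier := by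
    intro J hJ h
    by_cases h' : I.carrier ⊆ J.carrier
    · have e : J = I := carrier_inj (h.antisymm h')
      exact ⟨I.dual, Or.inr rfl, Or.inr (e ▸ subset_rfl)⟩
    · exact ⟨J, Or.inl ⟨hJ, h, h'⟩, Or.inl subset_rfl⟩
  obtain ⟨N, hN, hNB, hcov, -⟩ := exists_max_gap L I.a B hBL hp hlam (by
    intro J hJ
    rcases L.unlinked J hJ I hI with h | h | h | h
    · exact hside J hJ h
    · obtain ⟨M, hM, h'⟩ := hside J.dual (L.dual_mem J hJ) h
      exact ⟨M, hM, h'.symm⟩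
    · exact ⟨I.dual, Or.inr rfl, Or.inl h⟩
    · exact ⟨I.dual, Or.inr rfl, Or.inr h⟩) hchain
  have hID : I.dual ∈ N := by
    obtain ⟨M, hM, h⟩ := hcov I.dual (Or.inr rfl)
    rcases hNB hM with h' | rfl
    · exact absurd (h'.2.1 (h hz)) hzI
    · exact hM
  refine ⟨N, hN, ?_, hID⟩
  rintro ⟨K, rfl⟩
  have hIN : I ∈ ({K, K.dual} : Set GoodInt) := by
    rcases hID with h | h
    · right; rw [mem_singleton_iff, ← h, dual_dual]
    · left
      have : I.dual.dual = K.dual.dual := by rw [h]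
      exact this
  rcases hNB hIN with h | h
  · exact h.2.2 subset_rfl
  · exact I.ne (congrArg GoodInt.a h)

/-- A leaf with endpoint `p` would be linked with an interval `J` that has `p` in its exterior and
contains the other endpoint of the leaf. Here `p` is the initial endpoint. -/
theorem linked_a {A J : GoodInt} {p : S1} (hA : A ∈ L.mem) (hJ : J ∈ L.mem) (hAa : A.a = p)
    (hp : p ∈ J.dual.carrier) (h : A.b ∈ J.carrier) : False := by
  rcases laminar hJ hA hp (hAa ▸ a_notMem A) with h' | h' | h'
  · exact b_notMem A (h' h)
  · have hpJ := (mem_dual J p).1 hp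
    have := ((subset_iff (hAa ▸ a_notMem A) hpJ.1).1 h').1
    rw [lo_eq_zero.2 hAa] at this
    exact hpJ.2.1 (lo_eq_zero.1 (le_antisymm this (lo_nonneg _ _))).symm
  · obtain ⟨y, hy, hy'⟩ := meet_of_b_mem h
    exact Set.disjoint_left.1 h' hy' hy

/-- The same obstruction as in `linked_a`, with `p` the terminal endpoint of the leaf side. -/
theorem linked_b {C J : GoodInt} {p : S1} (hC : C ∈ L.mem) (hJ : J ∈ L.mem) (hCb : C.b = p)
    (hp : p ∈ J.dual.carrier) (h : C.a ∈ J.carrier) : False := by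
  rcases laminar hJ hC hp (hCb ▸ b_notMem C) with h' | h' | h'
  · exact a_notMem C (h' h)
  · have hpJ := (mem_dual J p).1 hp
    have := ((subset_iff (hCb ▸ b_notMem C) hpJ.1).1 h').2
    rw [hi_eq_one.2 hCb] at this
    exact hpJ.2.2 (hi_eq_one.1 (le_antisymm (hi_le_one _ _) this)).symm
  · obtain ⟨y, hy, hy'⟩ := meet_of_a_mem h
    exact Set.disjoint_left.1 h' hy' hy

/-- Between two leaves with the common endpoint `p` that are separated by a point `q` off the
endpoint set there is a non-leaf gap with vertex `p`. -/
theorem exists_gap_between {p q : S1} {A C : GoodInt} (hA : A ∈ L.mem) (hC : C ∈ L.mem)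
    (hAa : A.a = p) (hCb : C.b = p) (hq : q ∉ L.E) (h1 : hi p A < cd p q)
    (h2 : cd p q < lo p C) :
    ∃ G, L.IsGap G ∧ ¬ IsLeafGap G ∧ ∃ X ∈ G, X.a = p ∧ hi p A ≤ hi p X ∧ hi p X ≤ cd p q := by
  have hpA : p ∉ A.carrier := hAa ▸ a_notMem A
  have hpC : p ∉ C.carrier := hCb ▸ b_notMem C
  have hAb : A.b ≠ p := hAa ▸ A.ne.symm
  have hCa : C.a ≠ p := hCb ▸ C.ne
  have hqA : q ∉ A.carrier := fun h => by have := ((mem_lohi hpA q).1 h).2; linarith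
  have hqC : q ∉ C.carrier := fun h => by have := ((mem_lohi hpC q).1 h).1; linarith
  -- A leaf with endpoint `p` may only contribute its side away from `q`; this keeps the leaves
  -- `A` and `C` in different elements of the gap.
  set B : Set GoodInt :=
    {J | J ∈ L.mem ∧ p ∉ J.carrier ∧ (q ∈ J.carrier → p ≠ J.a ∧ p ≠ J.b)} with hB
  have hdual : ∀ J ∈ B, q ∈ J.carrier → p ∈ J.dual.carrier :=
    fun J hJ h => (mem_dual J p).2 ⟨hJ.2.1, hJ.2.2 h⟩
  have hlam : ∀ J ∈ B, ∀ K ∈ B,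
      J.carrier ⊆ K.carrier ∨ K.carrier ⊆ J.carrier ∨ Disjoint J.carrier K.carrier := by
    intro J hJ K hK
    by_cases hqJ : q ∈ J.carrier
    · exact laminar hJ.1 hK.1 (hdual J hJ hqJ) hK.2.1
    by_cases hqK : q ∈ K.carrier
    · rcases laminar hK.1 hJ.1 (hdual K hK hqK) hJ.2.1 with h | h | h
      exacts [Or.inr (Or.inl h), Or.inl h, Or.inr (Or.inr h.symm)]
    · exact laminar hJ.1 hK.1 (mem_dual_of_notMem_E hq hJ.1 hqJ) hqK
  have hsee : ∀ I ∈ L.mem, ∃ J ∈ B, I.carrier ⊆ J.carrier ∨ I.dual.carrier ⊆ J.carrier := by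
    intro I hI
    by_cases hIB : I ∈ B
    · exact ⟨I, hIB, Or.inl subset_rfl⟩
    refine ⟨I.dual, ⟨L.dual_mem I hI, ?_, ?_⟩, Or.inr subset_rfl⟩
    · intro h
      have := (mem_dual I p).1 h
      exact hIB ⟨hI, this.1, fun _ => this.2⟩
    · intro h
      have hqI := ((mem_dual I q).1 h).1
      by_cases hpI : p ∈ I.carrier
      · exact ⟨fun e => b_notMem I ((show p = I.b from e) ▸ hpI),
          fun e => a_notMem I ((show p = I.a from e) ▸ hpI)⟩
      · exact absurd ⟨hI, hpI, fun h => absurd h hqI⟩ hIB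
  have hchain : ∀ c : ℕ → GoodInt, (∀ n, c n ∈ B) →
      (∀ n, (c n).carrier ⊆ (c (n + 1)).carrier) → ∃ M ∈ B, ∀ n, (c n).carrier ⊆ M.carrier := by
    intro c hc hasc
    have hmono : Monotone fun n => (c n).carrier := monotone_nat_of_le_succ hasc
    -- A union containing `q` stops short of both `A.b` and `C.a`, so `p` is not one of its endpoints.
    have hAno : q ∈ (⋃ n, (c n).carrier) → A.b ∉ ⋃ n, (c n).carrier := by
      intro hq' hb
      obtain ⟨n, hn⟩ := mem_iUnion.1 hq'
      obtain ⟨m, hm⟩ := mem_iUnion.1 hb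
      exact linked_a hA (hc (max n m)).1 hAa (hdual _ (hc _) (hmono (le_max_left n m) hn))
        (hmono (le_max_right n m) hm)
    have hCno : q ∈ (⋃ n, (c n).carrier) → C.a ∉ ⋃ n, (c n).carrier := by
      intro hq' hb
      obtain ⟨n, hn⟩ := mem_iUnion.1 hq'
      obtain ⟨m, hm⟩ := mem_iUnion.1 hb
      exact linked_b hC (hc (max n m)).1 hCb (hdual _ (hc _) (hmono (le_max_left n m) hn))
        (hmono (le_max_right n m) hm)
    have hpU : p ∉ ⋃ n, (c n).carrier := fun h => by
      obtain ⟨n, hn⟩ := mem_iUnion.1 h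
      exact (hc n).2.1 hn
    rcases chain_union L p c (fun n => (hc n).1) (fun n => (hc n).2.1) hasc with ⟨K, hK, e⟩ | h
    · have hpK : p ∉ K.carrier := e ▸ hpU
      refine ⟨K, ⟨hK, hpK, fun hqK => ⟨fun ha => ?_, fun hb => ?_⟩⟩,
        fun n => e ▸ subset_iUnion (fun n => (c n).carrier) n⟩
      · refine hAno (e ▸ hqK) (e ▸ (mem_lohi hpK _).2 ⟨?_, ?_⟩)
        · rw [lo_eq_zero.2 ha.symm]; exact cd_pos hAb
        · have := ((mem_lohi hpK q).1 hqK).2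
          rw [hi_eq_cd hAb] at h1
          linarith
      · refine hCno (e ▸ hqK) (e ▸ (mem_lohi hpK _).2 ⟨?_, ?_⟩)
        · have := ((mem_lohi hpK q).1 hqK).1
          unfold lo at h2 this ⊢
          linarith
        · rw [hi_eq_one.2 hb.symm]; exact cd_lt_one _ _
    · exfalso
      refine hAno ?_ ?_
      · rw [h]; rintro rfl
        have := hi_pos q A
        rw [cd_self] at h1
        linarith
      · rw [h]; exact hAb
  obtain ⟨G, hG, hGB, hcov, -⟩ :=
    exists_max_gap L p B (fun J hJ => hJ.1) (fun J hJ => hJ.2.1) hlam hsee hchain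
  obtain ⟨X, hX, hAX⟩ := hcov A ⟨hA, hpA, fun h => absurd h hqA⟩
  obtain ⟨Y, hY, hCY⟩ := hcov C ⟨hC, hpC, fun h => absurd h hqC⟩
  have hXB := hGB hX
  have hYB := hGB hY
  have hX1 := (subset_iff hpA hXB.2.1).1 hAX
  have hY1 := (subset_iff hpC hYB.2.1).1 hCY
  rw [lo_eq_zero.2 hAa] at hX1
  rw [hi_eq_one.2 hCb] at hY1
  have hlX : lo p X = 0 := le_antisymm hX1.1 (lo_nonneg _ _)
  have hXa : X.a = p := lo_eq_zero.1 hlX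
  have hYb : Y.b = p := hi_eq_one.1 (le_antisymm (hi_le_one _ _) hY1.2)
  have hq0 : 0 < cd p q := (hi_pos p A).trans h1
  have hXq : hi p X ≤ cd p q := by
    by_contra! h
    have : q ∈ X.carrier := (mem_lohi hXB.2.1 q).2 ⟨by rw [hlX]; exact hq0, h⟩
    exact (hXB.2.2 this).1 hXa.symm
  have hYq : cd p q ≤ lo p Y := by
    by_contra! h
    have : q ∈ Y.carrier := (mem_lohi hYB.2.1 q).2
      ⟨h, by rw [hi_eq_one.2 hYb]; exact cd_lt_one _ _⟩
    exact (hYB.2.2 this).2 hYb.symm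
  have hXb : X.b ≠ p := hXa ▸ X.ne.symm
  refine ⟨G, hG, ?_, X, hX, hXa, hX1.2, hXq⟩
  rintro ⟨M, rfl⟩
  have hXY : X ≠ Y := by
    rintro rfl
    linarith
  have hdu : Y = X.dual := by
    rcases hX with rfl | hX <;> rcases hY with rfl | hY
    · exact absurd rfl hXY
    · exact hY
    · rw [mem_singleton_iff] at hX; rw [hX, dual_dual]
    · exact absurd (hX.trans hY.symm) hXY
  have hYX : lo p Y = hi p X := by rw [hdu, hi_eq_cd hXb]; rfl
  have : cd p q = cd p X.b := by rw [← hi_eq_cd hXb]; linarith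
  exact hq (cd_inj this ▸ b_mem_E hXB.1)

/-- The endpoint set contains no interval. -/
def CodenseE (L : LamSys) : Prop := ∀ I : GoodInt, ∃ q ∈ I.carrier, q ∉ L.E

theorem exists_between_notMem_E (hd : CodenseE L) (p : S1) {l h : ℝ} (hl : 0 < l) (hlh : l < h)
    (hh : h ≤ 1) : ∃ q, q ∉ L.E ∧ l < cd p q ∧ cd p q < h := by
  obtain ⟨K, hK, e1, e2⟩ := exists_int p hl.le hlh hh fun h => hl.ne' h.1
  obtain ⟨q, hq, hqE⟩ := hd K
  rw [mem_lohi hK, e1, e2] at hq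
  exact ⟨q, hqE, hq⟩

/-- In a loose system at most two leaves share a given endpoint. -/
theorem no_three (hL : L.Loose) (hd : CodenseE L) {p : S1} {A B C : GoodInt} (hA : A ∈ L.mem)
    (hB : B ∈ L.mem) (hC : C ∈ L.mem) (hAa : A.a = p) (hBa : B.a = p) (hCa : C.a = p)
    (h1 : hi p A < hi p B) (h2 : hi p B < hi p C) : False := by
  have hlo : ∀ J : GoodInt, J.a = p → lo p J.dual = hi p J := fun J hJ => by
    rw [hi_eq_cd (hJ ▸ J.ne.symm)]; rfl
  obtain ⟨q, hq, hq1, hq2⟩ := exists_between_notMem_E hd p (hi_pos p A) h1 (hi_le_one _ _)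
  obtain ⟨s, hs, hs1, hs2⟩ := exists_between_notMem_E hd p (hi_pos p B) h2 (hi_le_one _ _)
  obtain ⟨G, hG, hGn, X, hX, hXa, hX1, hX2⟩ := exists_gap_between hA (L.dual_mem B hB) hAa hBa hq
    hq1 (by rw [hlo B hBa]; exact hq2)
  obtain ⟨H, hH, hHn, Y, hY, hYa, hY1, hY2⟩ := exists_gap_between hB (L.dual_mem C hC) hBa hCa hs
    hs1 (by rw [hlo C hCa]; exact hs2)
  have e : G = H := by
    by_contra hne
    exact Set.disjoint_left.1 (hL G H hG hH hGn hHn hne) (hXa ▸ a_mem_gapVerts hG hX)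
      (hYa ▸ a_mem_gapVerts hH hY)
  subst e
  have hne : X ≠ Y := by rintro rfl; linarith
  have hsub : X.carrier ⊆ Y.carrier := (subset_iff (hXa ▸ a_notMem X) (hYa ▸ a_notMem Y)).2
    ⟨by rw [lo_eq_zero.2 hXa, lo_eq_zero.2 hYa], by linarith⟩
  obtain ⟨y, hy⟩ := exists_mem X
  exact Set.disjoint_left.1 (hG.2.1 X hX Y hY hne) hy (hsub hy)

/-- A side sequence of `S` provides elements properly contained in `S` that contain any two given
points of `S`. -/
theorem exists_of_sideSeq {S : GoodInt} (hS : L.HasSideSeq S) {x y : S1} (hx : x ∈ S.carrier)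
    (hy : y ∈ S.carrier) :
    ∃ c ∈ L.mem, c ≠ S ∧ c.carrier ⊆ S.carrier ∧ x ∈ c.carrier ∧ y ∈ c.carrier := by
  obtain ⟨c, hc, hne, hon, d, hd, hinf, hsup⟩ := hS
  obtain ⟨w, hw⟩ := exists_mem S.dual
  have hx' := mem_liminf_iff_eventually_mem.1 (hinf hx)
  have hy' := mem_liminf_iff_eventually_mem.1 (hinf hy)
  have hw' : ∀ᶠ n in atTop, w ∉ (d n).carrier := by
    have : w ∉ limsup (fun n => (d n).carrier) atTop :=
      fun h => notMem_closure_of_mem_dual hw (hsup h)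
    rwa [mem_limsup_iff_frequently_mem, not_frequently] at this
  obtain ⟨n, hxn, hyn, hwn⟩ := (hx'.and (hy'.and hw')).exists
  have hdL : d n ∈ L.mem := by
    rcases hd n with h | h
    · rw [h]; exact hc n
    · rw [h]; exact L.dual_mem _ (hc n)
  have hdS : (d n).carrier ⊆ S.carrier ∨ (d n).dual.carrier ⊆ S.carrier := by
    rcases hd n with h | h
    · rw [h]; exact hon n
    · rw [h, dual_dual]; exact (hon n).symm
  refine ⟨d n, hdL, ?_, ?_, hxn, hyn⟩
  · intro e
    rcases hd n with h | h
    · exact hne n (Or.inl (h.symm.trans e))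
    · refine hne n (Or.inr ?_)
      rw [← e, h, dual_dual]
  · refine hdS.resolve_right fun h => hwn ?_
    exact dual_subset h hw

/-- A leaf accumulated on both sides shares its endpoints with no other leaf. -/
theorem unique_of_real_leaf (hL : L.Loose) (hd : CodenseE L) {p : S1} {A D : GoodInt}
    (hA : A ∈ L.mem) (hD : D ∈ L.mem) (hAa : A.a = p) (hDa : D.a = p) (h1 : L.HasSideSeq A)
    (h2 : L.HasSideSeq A.dual) : D = A := by
  have hpA : p ∉ A.carrier := hAa ▸ a_notMem A
  have hpA' : p ∉ A.dual.carrier := hAa ▸ b_notMem A.dual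
  have hAb : A.b ≠ p := hAa ▸ A.ne.symm
  have hDb : D.b ≠ p := hDa ▸ D.ne.symm
  have hloA : lo p A = 0 := lo_eq_zero.2 hAa
  have hloA' : lo p A.dual = hi p A := by rw [hi_eq_cd hAb]; rfl
  have hhiA' : hi p A.dual = 1 := hi_eq_one.2 hAa
  have hcdD : cd p D.b = hi p D := (hi_eq_cd hDb).symm
  have hD1 : hi p D < 1 := by rw [← hcdD]; exact cd_lt_one _ _
  have hA1 : hi p A < 1 := by rw [hi_eq_cd hAb]; exact cd_lt_one _ _
  have hA0 := hi_pos p A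
  have hD0 := hi_pos p D
  rcases lt_trichotomy (hi p A) (hi p D) with h | h | h
  · exfalso
    obtain ⟨r, hr, hr'⟩ := exists_between h
    obtain ⟨y, rfl⟩ := exists_cd p (r := r) (by linarith) (by linarith)
    obtain ⟨c, hc, hcne, hsub, hDc, hyc⟩ := exists_of_sideSeq h2 (x := D.b) (y := y)
      ((mem_lohi hpA' _).2 ⟨by linarith, by linarith⟩)
      ((mem_lohi hpA' _).2 ⟨by linarith, by linarith⟩)
    have hpc : p ∉ c.carrier := fun h => hpA' (hsub h)
    have hs := (subset_iff hpc hpA').1 hsub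
    have hca : c.a ≠ p := fun e => by rw [lo_eq_zero.2 e] at hs; linarith [hs.1]
    have hcb : c.b = p := by
      by_contra hcb
      exact linked_a hD hc hDa ((mem_dual c p).2 ⟨hpc, Ne.symm hca, Ne.symm hcb⟩) hDc
    have hhc : hi p c.dual = lo p c := hi_eq_cd (J := c.dual) hca
    have hne : lo p c ≠ hi p A := fun e =>
      hcne (ext_lohi (p := p) (by rw [hloA', e]) (by rw [hhiA', hi_eq_one.2 hcb]))
    have hlt : hi p A < lo p c := lt_of_le_of_ne (by linarith [hs.1]) hne.symm
    have := ((mem_lohi hpc y).1 hyc).1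
    exact no_three hL hd hA (L.dual_mem c hc) hD hAa hcb hDa (by linarith) (by linarith)
  · exact ext_lohi (p := p) (by rw [hloA, lo_eq_zero.2 hDa]) h.symm
  · exfalso
    obtain ⟨r, hr, hr'⟩ := exists_between h
    obtain ⟨y, rfl⟩ := exists_cd p (r := r) (by linarith) (by linarith)
    obtain ⟨c, hc, hcne, hsub, hDc, hyc⟩ := exists_of_sideSeq h1 (x := D.b) (y := y)
      ((mem_lohi hpA _).2 ⟨by linarith, by linarith⟩)
      ((mem_lohi hpA _).2 ⟨by linarith, by linarith⟩)
    have hpc : p ∉ c.carrier := fun h => hpA (hsub h)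
    have hs := (subset_iff hpc hpA).1 hsub
    have hcb : c.b ≠ p := fun e => by rw [hi_eq_one.2 e] at hs; linarith [hs.2]
    have hca : c.a = p := by
      by_contra hca
      exact linked_a hD hc hDa ((mem_dual c p).2 ⟨hpc, Ne.symm hca, Ne.symm hcb⟩) hDc
    have hne : hi p c ≠ hi p A := fun e =>
      hcne (ext_lohi (p := p) (by rw [hloA, lo_eq_zero.2 hca]) e)
    have hlt : hi p c < hi p A := lt_of_le_of_ne hs.2 hne
    have := ((mem_lohi hpc y).1 hyc).2
    exact no_three hL hd hD hc hA hDa hca hAa (by linarith) hlt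

/-- An isolated element of a non-leaf gap would bound a second non-leaf gap sharing its
endpoints, against looseness. -/
theorem real_of_nonleaf (hL : L.Loose) {G : Set GoodInt} (hG : L.IsGap G) (hGn : ¬ IsLeafGap G) :
    ∀ I ∈ G, L.HasSideSeq I := by
  intro I hI
  by_contra hiso
  obtain ⟨N, hN, hNn, hIN⟩ := exists_gap_of_isolated (hG.1 hI) hiso
  have hne : G ≠ N := by
    rintro rfl
    exact hGn ⟨I, eq_leaf_of_mem hG hI hIN⟩
  exact Set.disjoint_left.1 (hL G N hG hN hGn hNn hne) (a_mem_gapVerts hG hI)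
    (b_mem_gapVerts hN hIN)

/-- A real leaf with endpoint `p` is the only real gap having `p` as a tip. -/
theorem eq_of_leaf_tip (hL : L.Loose) (hd : CodenseE L) {p : S1} {G H : Set GoodInt}
    (hG : L.IsGap G) (hGl : IsLeafGap G) (hGr : ∀ I ∈ G, L.HasSideSeq I) (hpG : p ∈ gapVerts G)
    (hH : L.IsGap H) (hpH : IsTipOf p H) : H = G := by
  obtain ⟨A, hAG, hAG', hAa⟩ : ∃ A, A ∈ G ∧ A.dual ∈ G ∧ A.a = p := by
    obtain ⟨I, rfl⟩ := hGl
    rcases mem_leaf_gapVerts.1 hpG with h | h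
    · exact ⟨I, by simp, by simp, h.symm⟩
    · exact ⟨I.dual, by simp, by simp [dual_dual], h.symm⟩
  have huniq : ∀ D ∈ L.mem, D.a = p → D = A := fun D hD hDa =>
    unique_of_real_leaf hL hd (hG.1 hAG) hD hAa hDa (hGr A hAG) (hGr _ hAG')
  obtain ⟨⟨J, hJ, hJa⟩, K, hK, hKb⟩ := tip_neighbors hH hpH
  have e1 : J = A := huniq J (hH.1 hJ) hJa
  have e2 : K = A.dual := by
    have : K.dual = A := huniq K.dual (L.dual_mem K (hH.1 hK)) hKb
    rw [← this, dual_dual]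
  rw [eq_leaf_of_mem hH (e1 ▸ hJ) (e2 ▸ hK), eq_leaf_of_mem hG hAG hAG']

/-- An endpoint that is not the pivot of a crown is a tip of exactly one real gap. -/
theorem existsUnique_real_tip (hQ : L.QuiteFull) (hL : L.Loose) (hd : CodenseE L) {p : S1}
    (hp : p ∈ L.E) (hpiv : ∀ G, L.IsGap G → ¬ IsPivotOf p G) :
    ∃! G : Set GoodInt, L.IsGap G ∧ (∀ I ∈ G, L.HasSideSeq I) ∧ IsTipOf p G := by
  refine existsUnique_of_exists_of_unique ?_ ?_
  · by_cases h : ∃ G, L.IsGap G ∧ ¬ IsLeafGap G ∧ p ∈ gapVerts G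
    · obtain ⟨G, hG, hGn, hpG⟩ := h
      exact ⟨G, hG, real_of_nonleaf hL hG hGn, (tip_or_pivot hQ hG hpG).resolve_right (hpiv G hG)⟩
    · push Not at h
      obtain ⟨I, hI, hpI⟩ := mem_E.1 hp
      have hG := leaf_isGap hI
      refine ⟨{I, I.dual}, hG, ?_,
        (tip_or_pivot hQ hG (mem_leaf_gapVerts.2 hpI)).resolve_right (hpiv _ hG)⟩
      have key : ∀ J ∈ L.mem, p = J.a ∨ p = J.b → L.HasSideSeq J := by
        intro J hJ hpJ
        by_contra hiso
        obtain ⟨N, hN, hNn, hJN⟩ := exists_gap_of_isolated hJ hiso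
        refine h N hN hNn ?_
        rcases hpJ with rfl | rfl
        · exact b_mem_gapVerts hN hJN
        · exact a_mem_gapVerts hN hJN
      rintro J (rfl | rfl)
      · exact key _ hI hpI
      · exact key _ (L.dual_mem _ hI) hpI.symm
  · rintro G H ⟨hG, hGr, hpG⟩ ⟨hH, hHr, hpH⟩
    by_cases hGl : IsLeafGap G
    · exact (eq_of_leaf_tip hL hd hG hGl hGr hpG.1 hH hpH).symm
    by_cases hHl : IsLeafGap H
    · exact eq_of_leaf_tip hL hd hH hHl hHr hpH.1 hG hpG
    by_contra hne
    exact Set.disjoint_left.1 (hL G H hG hH hGl hHl hne) hpG.1 hpH.1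

end Isolation

/-! ### Interleaving and the trichotomy -/

section Pair

variable {L M : LamSys}

/-- The endpoints of the other system are dense, and none of them lies in `L.E`. -/
theorem codense (hQ : M.QuiteFull) (ht : L.E ∩ M.E = ∅) : CodenseE L := fun I => by
  obtain ⟨w, hw, hwE⟩ := dense_E hQ I
  exact ⟨w, hw, fun h => (ht ▸ (⟨h, hwE⟩ : w ∈ L.E ∩ M.E) : w ∈ (∅ : Set S1))⟩

theorem crown_not_leaf {G : Set GoodInt} (hG : L.IsGap G) {p : S1} (hc : IsPivotOf p G) :
    ¬ IsLeafGap G := by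
  obtain ⟨t, ht⟩ := hc
  rintro ⟨I, rfl⟩
  refine pivot_not_leftFree hG ht (leftFree_of_finite ?_ p)
  exact (Set.toFinite {I.a, I.b}).subset fun y hy => mem_leaf_gapVerts.1 hy

/-- A gap interleaving with a crown is a crown with the same pivot. -/
theorem pivot_of_interleave (hQ : M.QuiteFull) {G H : Set GoodInt} (hG : L.IsGap G)
    (hH : M.IsGap H) {q : S1} (hc : IsPivotOf q G) (hGH : Interleave G H) : IsPivotOf q H := by
  obtain ⟨t, ht⟩ := hc
  have hqG : q ∈ gapVerts G := by rw [ht.2.2.2]; right; rfl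
  have hnl : ¬ LeftFree q (gapVerts H) := by
    rintro ⟨r, hr, h⟩
    refine pivot_not_leftFree hG ht ⟨max r 0, max_lt hr one_pos, fun y hy hyG => ?_⟩
    obtain ⟨hy1, hy2⟩ := max_lt_iff.1 hy
    rw [ht.2.2.2] at hyG
    rcases hyG with ⟨k, rfl⟩ | rfl
    -- the element of `G` starting at `t k` contains a vertex of `H`, closer to `q` than `t k`
    · obtain ⟨J, hJ, ha, -⟩ := crown_mem ht k
      obtain ⟨x, ⟨hxJ, hxH⟩, -⟩ := hGH.1 J hJ
      have := ((mem_lohi (mem_gapVerts.1 hqG J hJ) x).1 hxJ).1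
      rw [lo, ha] at this
      exact h x (hy1.trans this) hxH
    · rw [cd_self] at hy2; exact hy2.false
  have hqH : q ∈ gapVerts H := by
    refine mem_gapVerts.2 fun K hK hqK => hnl ⟨cd q K.a, cd_lt_one _ _, fun y hy hyH => ?_⟩
    refine mem_gapVerts.1 hyH K hK ?_
    rw [mem_cd q, cd_self] at hqK
    rw [mem_cd q]
    have := cd_nonneg q K.a
    have := cd_nonneg q K.b
    grind
  exact (tip_or_pivot hQ hH hqH).resolve_left fun h => hnl (isTipOf_iff.1 h).2.1

/-- The trichotomy at a point off the endpoint set of the second system. -/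
theorem trichotomy_of_notMem_E (hV : VeeringPair L M) {p : S1} (hp : p ∉ M.E) :
    (L.IsRainbowPt p ∧ M.IsRainbowPt p) ∨
    (M.IsRainbowPt p ∧
      ∃! G : Set GoodInt, L.IsGap G ∧ (∀ I ∈ G, L.HasSideSeq I) ∧ IsTipOf p G) ∨
    (∃ G1 G2 : Set GoodInt, L.IsGap G1 ∧ M.IsGap G2 ∧ IsCrown G1 ∧ IsCrown G2 ∧
      IsPivotOf p G1 ∧ IsPivotOf p G2 ∧ Interleave G1 G2) := by
  have crown : ∀ {G : Set GoodInt}, IsPivotOf p G → IsCrown G := fun ⟨t, ht⟩ => ⟨t, p, ht⟩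
  by_cases hL : ∃ G, L.IsGap G ∧ IsPivotOf p G
  · obtain ⟨G, hG, hpG⟩ := hL
    obtain ⟨H, hH, hGH⟩ := hV.inter1 G hG (crown_not_leaf hG hpG)
    have hpH := pivot_of_interleave hV.qf2 hG hH hpG hGH
    exact Or.inr (Or.inr ⟨G, H, hG, hH, crown hpG, crown hpH, hpG, hpH, hGH⟩)
  rcases rainbow_or_pivot hV.qf2 hp with hr | ⟨H, hH, hpH⟩
  · by_cases hpL : p ∈ L.E
    · push Not at hL
      exact Or.inr (Or.inl ⟨hr,
        existsUnique_real_tip hV.qf1 hV.loose1 (codense hV.qf2 hV.transverse) hpL hL⟩)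
    · exact Or.inl ⟨(rainbow_or_pivot hV.qf1 hpL).resolve_right hL, hr⟩
  · obtain ⟨G, hG, hHG⟩ := hV.inter2 H hH (crown_not_leaf hH hpH)
    exact absurd ⟨G, hG, pivot_of_interleave hV.qf1 hH hG hpH hHG⟩ hL

theorem VeeringPair.symm (hV : VeeringPair L M) : VeeringPair M L where
  qf1 := hV.qf2
  qf2 := hV.qf1
  loose1 := hV.loose2
  loose2 := hV.loose1
  transverse := by rw [inter_comm]; exact hV.transverse
  inter1 := hV.inter2
  inter2 := hV.inter1

end Pair

/-- for a veering pair, each point of the circle is a rainbow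
point of both systems, or a rainbow point of one and a tip of a unique real
gap of the other, or the common pivot of an interleaving pair of crowns. -/
theorem statement7 (L1 L2 : LamSys) (hV : VeeringPair L1 L2) (p : S1) :
    (L1.IsRainbowPt p ∧ L2.IsRainbowPt p) ∨
    (L1.IsRainbowPt p ∧
      ∃! G : Set GoodInt, L2.IsGap G ∧ (∀ I ∈ G, L2.HasSideSeq I) ∧ IsTipOf p G) ∨
    (L2.IsRainbowPt p ∧
      ∃! G : Set GoodInt, L1.IsGap G ∧ (∀ I ∈ G, L1.HasSideSeq I) ∧ IsTipOf p G) ∨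
    (∃ G1 G2 : Set GoodInt, L1.IsGap G1 ∧ L2.IsGap G2 ∧ IsCrown G1 ∧ IsCrown G2 ∧
      IsPivotOf p G1 ∧ IsPivotOf p G2 ∧ Interleave G1 G2) := by
  by_cases hp : p ∈ L2.E
  · have hp1 : p ∉ L1.E := fun h =>
      (hV.transverse ▸ (⟨h, hp⟩ : p ∈ L1.E ∩ L2.E) : p ∈ (∅ : Set S1))
    rcases trichotomy_of_notMem_E hV.symm hp1 with h | h | ⟨H, G, hH, hG, h1, h2, h3, h4, h5⟩
    · exact Or.inl h.symm
    · exact Or.inr (Or.inl h)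
    · exact Or.inr (Or.inr (Or.inr ⟨G, H, hG, hH, h2, h1, h4, h3, h5.symm⟩))
  · rcases trichotomy_of_notMem_E hV hp with h | h | h
    · exact Or.inl h
    · exact Or.inr (Or.inr (Or.inl h))
    · exact Or.inr (Or.inr (Or.inr h))

end Veering
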